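/- arXiv:1512.08708 — 3 statements merged into one kernel-verified Lean document; each statement's English description precedes it below -/
import Mathlib

section
/- Let f(t, X) ∈ ℚ[t][X] be a polynomial in X with coefficients in ℚ[t] which, regarded as a polynomial over ℚ(t), is monic in X, irreducible, and separable. Then there exists a ∈ ℚ such that the specialized polynomial f(a, X) ∈ ℚ[X] is irreducible over ℚ and the Galois group of f(a, X) over ℚ (the Galois group of its splitting field over ℚ) is isomorphic to the Galois group of f(t, X) over ℚ(t) (the Galois group of its splitting field over ℚ(t)). -/
/-!
Let `L` be the splitting field of `f` over `ℚ(t)`, with group `G`, and let `B` be the integral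
closure of `ℚ[t]` in `L`. For `a ∈ ℚ`, the decomposition group `D ≤ G` of a prime of `B` above
`t - a` maps onto the Galois group of the residue extension of `ℚ`. If `D ≠ G`, then `D` fixes an
integral element outside `ℚ(t)`, whose minimal polynomial over `ℚ[t]` therefore gets a rational root
at `t = a`. As `G` has finitely many subgroups, it suffices to find `a` that is not a zero of the
discriminant of `f` and at which finitely many monic separable polynomials without roots in `ℚ[t]`
do not acquire rational roots.

Scale such a polynomial to `h ∈ ℤ[t][X]`, choose an integer `t₀` where it stays separable, and take
`a = t₀ + p u` with `p` a large prime and `u` in a fixed finite set. By Hensel's lemma, the roots in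
a fixed residue class mod `p` agree modulo `p ^ n` with the values of a polynomial in `u` of degree
`< n`. Integer roots are `O(p ^ (n - 1))` for a suitable `n`, so a divided difference of order `n`
of them is, after clearing a denominator independent of `p`, a multiple of `p ^ n` smaller than
`p ^ n`, that is, zero. They are thus values of a single rational polynomial of degree `< n`. If
there were too many of them, this polynomial would be a root of `h` in `ℚ[t]`.
-/

open Polynomial Filter
open scoped Finset

universe u

/-! ### Integer-valued interpolation -/

lemma exists_weights_sum_eval_eq_mul_coeff {n : ℕ} {S : Finset ℤ} (hS : #S = n + 1) :
    ∃ (w : ℤ → ℤ) (N : ℤ), N ≠ 0 ∧ ∀ P : ℚ[X], P.degree < (n + 1 : ℕ) →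
      ∑ u ∈ S, w u * P.eval (u : ℚ) = N * P.coeff n := by
  let weight (u : ℤ) : ℚ := (∏ v ∈ S.erase u, ((u : ℚ) - v))⁻¹
  obtain ⟨N, hN⟩ := IsLocalization.exist_integer_multiples (nonZeroDivisors ℤ) S weight
  choose! w hw using hN
  refine ⟨w, N, nonZeroDivisors.coe_ne_zero N, fun P hP => ?_⟩
  rw [← hS] at hP
  have hcoeff : P.coeff n = ∑ u ∈ S, weight u * P.eval (u : ℚ) := by
    simpa only [hS, Nat.add_sub_cancel, div_eq_inv_mul] using
      Lagrange.coeff_eq_sum (Int.cast_injective (α := ℚ)).injOn hP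
  rw [hcoeff, Finset.mul_sum]
  refine Finset.sum_congr rfl fun u hu => ?_
  have hwu : (w u : ℚ) = (N : ℤ) * weight u := by
    simpa only [eq_intCast, zsmul_eq_mul] using hw u hu
  rw [hwu, mul_assoc]

lemma exists_interpolation_weights {n : ℕ} {S : Finset ℤ} (hS : #S = n + 1) :
    ∃ w : ℤ → ℤ, (∀ G : ℤ[X], G.degree < n → ∑ u ∈ S, w u * G.eval u = 0) ∧
      ∀ x : ℤ → ℤ, ∑ u ∈ S, w u * x u = 0 →
        ∃ P : ℚ[X], P.degree < n ∧ ∀ u ∈ S, P.eval (u : ℚ) = x u := by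
  have hinj : Set.InjOn (Int.cast : ℤ → ℚ) S := Int.cast_injective.injOn
  obtain ⟨w, N, hN, hw⟩ := exists_weights_sum_eval_eq_mul_coeff hS
  refine ⟨w, fun G hG => ?_, fun x hx => ?_⟩
  · have hGdeg : (G.map (Int.castRingHom ℚ)).degree < n := degree_map_le.trans_lt hG
    have hsum := hw _ (hGdeg.trans (by exact_mod_cast n.lt_succ_self))
    rw [coeff_eq_zero_of_degree_lt hGdeg, mul_zero] at hsum
    simp only [eval_intCast_map, eq_intCast, Int.cast_id] at hsum
    exact_mod_cast hsum
  · let P := Lagrange.interpolate S (Int.cast : ℤ → ℚ) (fun u => (x u : ℚ))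
    have hPval (u : ℤ) (hu : u ∈ S) : P.eval (u : ℚ) = x u :=
      Lagrange.eval_interpolate_at_node _ hinj hu
    have hPdeg : P.degree < (n + 1 : ℕ) := hS ▸ Lagrange.degree_interpolate_lt _ hinj
    have hPcoeff : P.coeff n = 0 := by
      have hsum : (N : ℚ) * P.coeff n = ∑ u ∈ S, (w u : ℚ) * x u :=
        (hw P hPdeg).symm.trans (Finset.sum_congr rfl fun u hu => by rw [hPval u hu])
      refine (mul_eq_zero_iff_left (Int.cast_ne_zero.mpr hN)).mp (hsum.trans ?_)
      exact_mod_cast hx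
    refine ⟨P, (degree_lt_iff_coeff_zero _ _).mpr fun i hi => ?_, hPval⟩
    rcases hi.eq_or_lt with rfl | hlt
    · exact hPcoeff
    · exact coeff_eq_zero_of_degree_lt (hPdeg.trans_le (by exact_mod_cast hlt))

lemma exists_rigid_interpolation {n : ℕ} {S : Finset ℤ} (hS : #S = n + 1) :
    ∃ B : ℤ, 0 ≤ B ∧ ∀ (m M : ℤ) (G : ℤ[X]) (x : ℤ → ℤ), B * M < m → G.degree < n →
      (∀ u ∈ S, m ∣ x u - G.eval u) → (∀ u ∈ S, |x u| ≤ M) →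
        ∃ P : ℚ[X], P.degree < n ∧ ∀ u ∈ S, P.eval (u : ℚ) = x u := by
  obtain ⟨w, hwG, hwx⟩ := exists_interpolation_weights hS
  refine ⟨∑ u ∈ S, |w u|, Finset.sum_nonneg fun _ _ => abs_nonneg _,
    fun m M G x hm hG hdvd hbound => hwx x ?_⟩
  have hsum_dvd : m ∣ ∑ u ∈ S, w u * x u := by
    have : ∑ u ∈ S, w u * x u = ∑ u ∈ S, w u * (x u - G.eval u) := by
      simp only [mul_sub, Finset.sum_sub_distrib, hwG G hG, sub_zero]
    rw [this]
    exact Finset.dvd_sum fun u hu => (hdvd u hu).mul_left _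
  refine Int.eq_zero_of_abs_lt_dvd hsum_dvd (lt_of_le_of_lt ?_ hm)
  calc |∑ u ∈ S, w u * x u| ≤ ∑ u ∈ S, |w u| * |x u| := by
        simpa only [abs_mul] using Finset.abs_sum_le_sum_abs (fun u => w u * x u) S
    _ ≤ (∑ u ∈ S, |w u|) * M := by
        rw [Finset.sum_mul]
        exact Finset.sum_le_sum fun u hu => by gcongr; exact hbound u hu

lemma exists_uniform_rigid_interpolation (U : Finset ℤ) (n : ℕ) :
    ∃ B : ℤ, ∀ (m M : ℤ) (G : ℤ[X]) (x : ℤ → ℤ), B * M < m → G.degree < n →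
      ∀ V ⊆ U, n ≤ #V → (∀ u ∈ V, m ∣ x u - G.eval u) → (∀ u ∈ V, |x u| ≤ M) →
        ∃ P : ℚ[X], P.degree < n ∧ ∀ u ∈ V, P.eval (u : ℚ) = x u := by
  have (S : Finset ℤ) := exists_rigid_interpolation (n := n) (S := S)
  choose! B hB0 hB using this
  refine ⟨∑ S ∈ U.powersetCard (n + 1), B S,
    fun m M G x hm hG V hVU hnV hdvd hbound => ?_⟩
  have hinj (S : Finset ℤ) : Set.InjOn (Int.cast : ℤ → ℚ) S := Int.cast_injective.injOn
  obtain ⟨S, hSV, hSn⟩ := Finset.exists_subset_card_eq hnV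
  obtain rfl | ⟨v, hv⟩ := V.eq_empty_or_nonempty
  · exact ⟨0, by simp, by simp⟩
  have hM : 0 ≤ M := (abs_nonneg _).trans (hbound v hv)
  let P := Lagrange.interpolate S (Int.cast : ℤ → ℚ) (fun u => (x u : ℚ))
  have hPS (u : ℤ) (hu : u ∈ S) : P.eval (u : ℚ) = x u :=
    Lagrange.eval_interpolate_at_node _ (hinj S) hu
  have hPdeg : P.degree < #S := Lagrange.degree_interpolate_lt _ (hinj S)
  refine ⟨P, hSn ▸ hPdeg, fun u hu => ?_⟩
  by_cases huS : u ∈ S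
  · exact hPS u huS
  have hsub : insert u S ⊆ V := Finset.insert_subset hu hSV
  have hcard : #(insert u S) = n + 1 := by rw [Finset.card_insert_of_notMem huS, hSn]
  have hBle : B (insert u S) ≤ ∑ S ∈ U.powersetCard (n + 1), B S :=
    Finset.single_le_sum (fun T hT => hB0 T (Finset.mem_powersetCard.mp hT).2)
      (Finset.mem_powersetCard.mpr ⟨hsub.trans hVU, hcard⟩)
  obtain ⟨P', hP'deg, hP'⟩ := hB _ hcard m M G x
    ((mul_le_mul_of_nonneg_right hBle hM).trans_lt hm) hG
    (fun w hw => hdvd w (hsub hw)) (fun w hw => hbound w (hsub hw))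
  have hPP' : P = P' := Polynomial.eq_of_degrees_lt_of_eval_index_eq S (hinj S) hPdeg
    (hSn ▸ hP'deg) fun w hw => by
      rw [hPS w hw, hP' w (Finset.mem_insert_of_mem hw)]
  rw [hPP', hP' u (Finset.mem_insert_self u S)]

/-! ### Hensel lifting -/

section Hensel

variable {A : Type*} [CommRing A] {I : Ideal A} {h : A[X]} {x₀ c : A}

lemma mul_eval_derivative_sub_one_mem (hderiv : c * h.derivative.eval x₀ - 1 ∈ I) {y : A}
    (hy : y - x₀ ∈ I) : c * h.derivative.eval y - 1 ∈ I := by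
  have hsub : h.derivative.eval y - h.derivative.eval x₀ ∈ I :=
    I.mem_of_dvd (sub_dvd_eval_sub y x₀ _) hy
  convert I.add_mem (I.mul_mem_left c hsub) hderiv using 1
  ring

lemma exists_eval_mem_pow (hroot : h.eval x₀ ∈ I) (hderiv : c * h.derivative.eval x₀ - 1 ∈ I)
    (n : ℕ) : ∃ y : A, y - x₀ ∈ I ∧ h.eval y ∈ I ^ (n + 1) := by
  induction n with
  | zero => exact ⟨x₀, by simp, by simpa using hroot⟩
  | succ n ih =>
    obtain ⟨y, hy, hy_root⟩ := ih
    have hy_root' : h.eval y ∈ I := Ideal.pow_le_self n.succ_ne_zero hy_root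
    obtain ⟨k, hk⟩ := h.binomExpansion y (-(c * h.eval y))
    refine ⟨y + -(c * h.eval y), ?_, ?_⟩
    · rw [add_sub_right_comm]
      exact I.add_mem hy (I.neg_mem (I.mul_mem_left c hy_root'))
    · have hsq : h.eval y * h.eval y ∈ I ^ (n + 1 + 1) := by
        rw [pow_succ]
        exact Ideal.mul_mem_mul hy_root hy_root'
      have hlin : h.eval y * (c * h.derivative.eval y - 1) ∈ I ^ (n + 1 + 1) := by
        rw [pow_succ]
        exact Ideal.mul_mem_mul hy_root (mul_eval_derivative_sub_one_mem hderiv hy)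
      convert Ideal.sub_mem _ (Ideal.mul_mem_left _ (k * c ^ 2) hsq) hlin using 1
      rw [hk]
      ring

lemma sub_mem_pow_of_eval_mem_pow (hderiv : c * h.derivative.eval x₀ - 1 ∈ I) {y z : A}
    (hy : y - x₀ ∈ I) (hz : z - x₀ ∈ I) {n : ℕ} (hy_root : h.eval y ∈ I ^ n)
    (hz_root : h.eval z ∈ I ^ n) : y - z ∈ I ^ n := by
  induction n with
  | zero => simp
  | succ n ih =>
    have hsub := ih (Ideal.pow_le_pow_right n.le_succ hy_root)
      (Ideal.pow_le_pow_right n.le_succ hz_root)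
    have hyz : y - z ∈ I := by simpa using I.sub_mem hy hz
    obtain ⟨k, hk⟩ := h.binomExpansion z (y - z)
    rw [add_sub_cancel] at hk
    have hsq : (y - z) * (y - z) ∈ I ^ (n + 1) := Ideal.mul_mem_mul hsub hyz
    have hlin : (y - z) * (c * h.derivative.eval z - 1) ∈ I ^ (n + 1) :=
      Ideal.mul_mem_mul hsub (mul_eval_derivative_sub_one_mem hderiv hz)
    have hval := Ideal.mul_mem_left _ c (Ideal.sub_mem _ hy_root hz_root)
    convert Ideal.sub_mem _ (Ideal.sub_mem _ hval hlin) (Ideal.mul_mem_left _ (c * k) hsq) using 1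
    rw [hk]
    ring

end Hensel

lemma dvd_eval_add_mul_iff {R : Type*} [CommRing R] (g : R[X]) {p t u : R} :
    p ∣ g.eval (t + p * u) ↔ p ∣ g.eval t := by
  have hsub := sub_dvd_eval_sub (t + p * u) t g
  rw [add_sub_cancel_left] at hsub
  exact dvd_iff_dvd_of_dvd_sub ((dvd_mul_right p u).trans hsub)

/-- The ideal `(p, T - t₀)` of integer polynomials whose value at `t₀` is divisible by `p`. -/
noncomputable def valueIdeal (p t₀ : ℤ) : Ideal ℤ[X] := (Ideal.span {p}).comap (evalRingHom t₀)

lemma mem_valueIdeal {p t₀ : ℤ} {g : ℤ[X]} : g ∈ valueIdeal p t₀ ↔ p ∣ g.eval t₀ :=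
  Ideal.mem_span_singleton

lemma dvd_eval_add_of_mem_valueIdeal {p t₀ : ℤ} {g : ℤ[X]} (hg : g ∈ valueIdeal p t₀) (u : ℤ) :
    p ∣ g.eval (t₀ + p * u) :=
  (dvd_eval_add_mul_iff g).mpr (mem_valueIdeal.mp hg)

lemma eval_mem_span_pow_of_mem_valueIdeal_pow {p t₀ : ℤ} {g : ℤ[X]} {m : ℕ}
    (hg : g ∈ valueIdeal p t₀ ^ m) (u : ℤ) : g.eval (t₀ + p * u) ∈ Ideal.span {p} ^ m := by
  have hmap : (valueIdeal p t₀).map (evalRingHom (t₀ + p * u)) ≤ Ideal.span {p} :=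
    Ideal.map_le_iff_le_comap.mpr fun g hg =>
      Ideal.mem_span_singleton.mpr (dvd_eval_add_of_mem_valueIdeal hg u)
  have hmem := Ideal.mem_map_of_mem (evalRingHom (t₀ + p * u)) hg
  rw [Ideal.map_pow] at hmem
  exact Ideal.pow_right_mono hmap m hmem

lemma evalEval_eval_right {R : Type*} [CommRing R] (h : R[X][X]) (P : R[X]) (t : R) :
    h.evalEval t (P.eval t) = (h.eval P).eval t := by
  rw [← map_evalRingHom_eval, eval_map, ← coe_evalRingHom, eval₂_at_apply]

lemma exists_local_parametrization {h : ℤ[X][X]} {p t₀ x₀ c : ℤ}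
    (hroot : p ∣ h.evalEval t₀ x₀) (hderiv : p ∣ c * h.derivative.evalEval t₀ x₀ - 1) (n : ℕ) :
    ∃ F : ℤ[X], F.degree < n ∧ ∀ u x : ℤ, p ∣ x - x₀ → h.evalEval (t₀ + p * u) x = 0 →
      p ^ n ∣ x - F.eval (t₀ + p * u) := by
  have hderiv_mem : C c * h.derivative.eval (C x₀) - 1 ∈ valueIdeal p t₀ :=
    mem_valueIdeal.mpr <| by rwa [eval_sub, eval_mul, eval_C, eval_one]
  -- `F` lifts the root `x₀` over `ℤ[T]`, so its values lift it at all `t₀ + p * u` at once.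
  obtain ⟨F, hF_near, hF_root⟩ := exists_eval_mem_pow (mem_valueIdeal.mpr hroot) hderiv_mem n
  have hmonic : ((X - C t₀ : ℤ[X]) ^ n).Monic := (monic_X_sub_C t₀).pow n
  refine ⟨F %ₘ (X - C t₀) ^ n, ?_, fun u x hx hx_root => ?_⟩
  · simpa only [degree_pow, degree_X_sub_C, nsmul_one] using degree_modByMonic_lt F hmonic
  have hmod : p ^ n ∣ F.eval (t₀ + p * u) - (F %ₘ (X - C t₀) ^ n).eval (t₀ + p * u) := by
    refine ⟨u ^ n * (F /ₘ (X - C t₀) ^ n).eval (t₀ + p * u), ?_⟩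
    nth_rw 1 [← modByMonic_add_div F ((X - C t₀) ^ n)]
    simp only [eval_add, eval_mul, eval_pow, eval_sub, eval_X, eval_C]
    ring
  have hx_F : x - F.eval (t₀ + p * u) ∈ Ideal.span {p} ^ n := by
    refine sub_mem_pow_of_eval_mem_pow (h := h.map (evalRingHom (t₀ + p * u))) (c := c)
      (x₀ := x₀) ?_ (Ideal.mem_span_singleton.mpr hx) ?_ ?_ ?_
    · have hderiv_dvd := dvd_eval_add_of_mem_valueIdeal hderiv_mem u
      rw [eval_sub, eval_mul, eval_C, eval_one] at hderiv_dvd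
      rwa [derivative_map, map_evalRingHom_eval, Ideal.mem_span_singleton]
    · have hF_dvd := dvd_eval_add_of_mem_valueIdeal hF_near u
      rwa [eval_sub, eval_C, ← Ideal.mem_span_singleton] at hF_dvd
    · rw [map_evalRingHom_eval, hx_root]
      exact Ideal.zero_mem _
    · rw [map_evalRingHom_eval, evalEval_eval_right]
      exact eval_mem_span_pow_of_mem_valueIdeal_pow (Ideal.pow_le_pow_right n.le_succ hF_root) u
  rw [Ideal.span_singleton_pow, Ideal.mem_span_singleton] at hx_F
  simpa only [sub_add_sub_cancel] using dvd_add hx_F hmod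

/-! ### Integer roots along a progression -/

lemma abs_le_sum_abs_coeff_of_isRoot {q : ℤ[X]} (hq : q.Monic) {x : ℤ} (hx : q.eval x = 0) :
    |x| ≤ ∑ i ∈ Finset.range q.natDegree, |q.coeff i| := by
  rcases eq_or_ne x 0 with rfl | hx0
  · simpa using Finset.sum_nonneg fun i _ => abs_nonneg (q.coeff i)
  have hx1 : 1 ≤ |x| := Int.one_le_abs hx0
  have hdeg : q.natDegree ≠ 0 := fun h0 => by
    simp [hq.natDegree_eq_zero.mp h0] at hx
  rw [eval_eq_sum_range, Finset.sum_range_succ, hq.coeff_natDegree, one_mul,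
    add_eq_zero_iff_eq_neg'] at hx
  refine le_of_mul_le_mul_left ?_ (pow_pos (zero_lt_one.trans_le hx1) (q.natDegree - 1))
  calc |x| ^ (q.natDegree - 1) * |x| = |∑ i ∈ Finset.range q.natDegree, q.coeff i * x ^ i| := by
        rw [pow_sub_one_mul hdeg, ← abs_pow, hx, abs_neg]
    _ ≤ ∑ i ∈ Finset.range q.natDegree, |q.coeff i| * |x| ^ i := by
        simpa only [abs_mul, abs_pow] using
          Finset.abs_sum_le_sum_abs (fun i => q.coeff i * x ^ i) _
    _ ≤ ∑ i ∈ Finset.range q.natDegree, |q.coeff i| * |x| ^ (q.natDegree - 1) := by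
        gcongr with i hi
        exact Nat.le_sub_one_of_lt (Finset.mem_range.mp hi)
    _ = |x| ^ (q.natDegree - 1) * ∑ i ∈ Finset.range q.natDegree, |q.coeff i| := by
        rw [← Finset.sum_mul, mul_comm]

lemma abs_eval_le_sum_abs_coeff_mul_pow (g : ℤ[X]) (t : ℤ) :
    |g.eval t| ≤ (∑ i ∈ Finset.range (g.natDegree + 1), |g.coeff i|) *
      (1 + |t|) ^ g.natDegree := by
  rw [eval_eq_sum_range, Finset.sum_mul]
  refine (Finset.abs_sum_le_sum_abs _ _).trans (Finset.sum_le_sum fun i hi => ?_)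
  rw [abs_mul, abs_pow]
  gcongr
  calc |t| ^ i ≤ (1 + |t|) ^ i := by gcongr; exact le_add_of_nonneg_left zero_le_one
    _ ≤ (1 + |t|) ^ g.natDegree := by
        gcongr
        · exact le_add_of_nonneg_right (abs_nonneg t)
        · exact Nat.lt_succ_iff.mp (Finset.mem_range.mp hi)

lemma exists_root_growth_bound {h : ℤ[X][X]} (hh : h.Monic) :
    ∃ (C : ℤ) (k : ℕ), 0 ≤ C ∧ ∀ t x : ℤ, h.evalEval t x = 0 → |x| ≤ C * (1 + |t|) ^ k := by
  let size (g : ℤ[X]) : ℤ := ∑ i ∈ Finset.range (g.natDegree + 1), |g.coeff i|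
  have size_nonneg (g : ℤ[X]) : 0 ≤ size g := Finset.sum_nonneg fun _ _ => abs_nonneg _
  let k := (Finset.range h.natDegree).sup fun i => (h.coeff i).natDegree
  refine ⟨∑ i ∈ Finset.range h.natDegree, size (h.coeff i), k,
    Finset.sum_nonneg fun i _ => size_nonneg _, fun t x hx => ?_⟩
  rw [← map_evalRingHom_eval] at hx
  refine (abs_le_sum_abs_coeff_of_isRoot (hh.map _) hx).trans ?_
  rw [hh.natDegree_map, Finset.sum_mul]
  refine Finset.sum_le_sum fun i hi => ?_
  rw [coeff_map, coe_evalRingHom]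
  refine (abs_eval_le_sum_abs_coeff_mul_pow _ t).trans ?_
  gcongr
  · exact le_add_of_nonneg_right (abs_nonneg t)
  · exact Finset.le_sup (f := fun i => (h.coeff i).natDegree) hi

lemma exists_card_le_of_forall_evalEval_eq_zero {R : Type*} [CommRing R] [IsDomain R]
    {h : R[X][X]} (hno_root : ∀ P : R[X], h.eval P ≠ 0) (n : ℕ) :
    ∃ E : ℕ, ∀ P : R[X], P.natDegree ≤ n → ∀ V : Finset R,
      (∀ t ∈ V, h.evalEval t (P.eval t) = 0) → #V ≤ E := by
  refine ⟨(Finset.range (h.natDegree + 1)).sup fun i => (h.coeff i).natDegree + i * n,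
    fun P hP V hV => ?_⟩
  have hdeg : (h.eval P).natDegree ≤
      (Finset.range (h.natDegree + 1)).sup fun i => (h.coeff i).natDegree + i * n := by
    rw [eval_eq_sum_range]
    refine natDegree_sum_le_of_forall_le _ _ fun i hi => ?_
    calc (h.coeff i * P ^ i).natDegree ≤ (h.coeff i).natDegree + i * n :=
          natDegree_mul_le_of_le le_rfl (natDegree_pow_le_of_le i hP)
      _ ≤ _ := Finset.le_sup (f := fun i => (h.coeff i).natDegree + i * n) hi
  refine (card_le_degree_of_subset_roots fun t ht => ?_).trans hdeg
  rw [mem_roots (hno_root P), IsRoot.def, ← evalEval_eval_right]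
  exact hV t ht

lemma exists_affine_reparametrization {K : Type*} [Field K] {p : K} (hp : p ≠ 0) (t₀ : K)
    (P : K[X]) : ∃ Q : K[X], Q.natDegree ≤ P.natDegree ∧ ∀ u, Q.eval (t₀ + p * u) = P.eval u := by
  refine ⟨P.comp (C p⁻¹ * (X - C t₀)), ?_, fun u => ?_⟩
  · refine natDegree_comp_le.trans_eq ?_
    rw [natDegree_C_mul (inv_ne_zero hp), natDegree_X_sub_C, mul_one]
  · simp [hp]

lemma exists_bezout_of_separable {R K : Type*} [CommRing R] [IsDomain R] [Field K] [Algebra R K]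
    [IsFractionRing R K] {h : R[X]} (hsep : (h.map (algebraMap R K)).Separable) :
    ∃ (A B : R[X]) (D : R), D ≠ 0 ∧ A * h + B * h.derivative = C D := by
  obtain ⟨a, b, hab⟩ := hsep
  obtain ⟨r, hr, ha⟩ := IsLocalization.integerNormalization_spec (nonZeroDivisors R) a
  obtain ⟨s, hs, hb⟩ := IsLocalization.integerNormalization_spec (nonZeroDivisors R) b
  refine ⟨C s * IsLocalization.integerNormalization (nonZeroDivisors R) a,
    C r * IsLocalization.integerNormalization (nonZeroDivisors R) b, r * s,
    mul_ne_zero (nonZeroDivisors.ne_zero hr) (nonZeroDivisors.ne_zero hs), ?_⟩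
  apply map_injective (algebraMap R K) (IsFractionRing.injective R K)
  have smul_eq (c : R) (q : K[X]) : c • q = C (algebraMap R K c) * q := by
    rw [← algebraMap_smul K c q, smul_eq_C_mul]
  rw [smul_eq] at ha hb
  simp only [Polynomial.map_add, Polynomial.map_mul, map_C, ha, hb, ← derivative_map, map_mul]
  linear_combination (C (algebraMap R K r) * C (algebraMap R K s)) * hab

lemma separable_map_of_bezout {R F : Type*} [CommRing R] [Field F] (φ : R →+* F)
    {A B h : R[X]} {D : R} (hbezout : A * h + B * h.derivative = C D) (hD : φ D ≠ 0) :
    (h.map φ).Separable := by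
  refine ⟨C (φ D)⁻¹ * A.map φ, C (φ D)⁻¹ * B.map φ, ?_⟩
  have hmap := congrArg (Polynomial.map φ) hbezout
  simp only [Polynomial.map_add, Polynomial.map_mul, map_C, ← derivative_map] at hmap
  rw [mul_assoc, mul_assoc, ← mul_add, hmap, ← C_mul, inv_mul_cancel₀ hD, C_1]

lemma degree_lt_add_one_iff_natDegree_le {R : Type*} [Semiring R] {F : R[X]} {n : ℕ} :
    F.degree < (n + 1 : ℕ) ↔ F.natDegree ≤ n :=
  (degree_lt_iff_coeff_zero F (n + 1)).trans natDegree_le_iff_coeff_eq_zero.symm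

lemma one_add_abs_add_mul_le {p t₀ u : ℤ} (hp : 1 ≤ p) :
    1 + |t₀ + p * u| ≤ (1 + |t₀| + |u|) * p := by
  calc 1 + |t₀ + p * u| ≤ 1 + (|t₀| + p * |u|) := by
        gcongr
        simpa only [abs_mul, abs_of_nonneg (zero_le_one.trans hp)] using abs_add_le t₀ (p * u)
    _ ≤ (1 + |t₀| + |u|) * p := by nlinarith [abs_nonneg t₀]

lemma exists_root_growth_bound_on_progression {h : ℤ[X][X]} (hh : h.Monic) (t₀ : ℤ) :
    ∃ k : ℕ, ∀ U : Finset ℤ, ∃ C : ℤ, ∀ p : ℤ, 1 ≤ p → ∀ u ∈ U, ∀ x : ℤ,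
      h.evalEval (t₀ + p * u) x = 0 → |x| ≤ C * p ^ k := by
  obtain ⟨C, k, hC, hbound⟩ := exists_root_growth_bound hh
  refine ⟨k, fun U => ⟨C * (1 + |t₀| + ∑ u ∈ U, |u|) ^ k, fun p hp u hu x hx => ?_⟩⟩
  rw [mul_assoc, ← mul_pow]
  refine (hbound _ x hx).trans ?_
  gcongr
  refine (one_add_abs_add_mul_le hp).trans ?_
  gcongr
  exact Finset.single_le_sum (f := fun u => |u|) (fun _ _ => abs_nonneg _) hu

lemma exists_interpolation_of_roots {h : ℤ[X][X]} (hh : h.Monic) (t₀ : ℤ) :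
    ∃ n : ℕ, ∀ U : Finset ℤ, ∀ᶠ p : ℕ in atTop, ∀ x₀ c : ℤ, ↑p ∣ h.evalEval t₀ x₀ →
      ↑p ∣ c * h.derivative.evalEval t₀ x₀ - 1 → ∀ V ⊆ U, n ≤ #V → ∀ x : ℤ → ℤ,
        (∀ u ∈ V, ↑p ∣ x u - x₀) → (∀ u ∈ V, h.evalEval (t₀ + p * u) (x u) = 0) →
          ∃ P : ℚ[X], P.natDegree ≤ n ∧ ∀ u ∈ V, P.eval ((t₀ + p * u : ℤ) : ℚ) = x u := by
  obtain ⟨k, hgrowth⟩ := exists_root_growth_bound_on_progression hh t₀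
  refine ⟨k + 1, fun U => ?_⟩
  obtain ⟨M, hM⟩ := hgrowth U
  obtain ⟨B, hB⟩ := exists_uniform_rigid_interpolation U (k + 1)
  filter_upwards [eventually_gt_atTop (B * M).toNat] with p hpBM x₀ c hroot hderiv V hVU hnV
    x hx_near hx_root
  have hp : (1 : ℤ) ≤ p := by omega
  obtain ⟨F, hFdeg, hF⟩ := exists_local_parametrization hroot hderiv (k + 1)
  have hGdeg : (F.comp (C t₀ + C (p : ℤ) * X)).degree < (k + 1 : ℕ) := by
    rw [degree_lt_add_one_iff_natDegree_le] at hFdeg ⊢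
    exact natDegree_comp_le.trans <| (Nat.mul_le_mul hFdeg (by compute_degree)).trans_eq (mul_one k)
  have hsmall : B * (M * p ^ k) < (p : ℤ) ^ (k + 1) := by
    rw [← mul_assoc, pow_succ']
    exact mul_lt_mul_of_pos_right (by omega) (by positivity)
  obtain ⟨P, hPdeg, hP⟩ := hB _ _ _ x hsmall hGdeg V hVU hnV
    (fun u hu => by simpa using hF u (x u) (hx_near u hu) (hx_root u hu))
    (fun u hu => hM p hp u (hVU hu) (x u) (hx_root u hu))
  obtain ⟨Q, hQdeg, hQ⟩ := exists_affine_reparametrization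
    (p := (p : ℚ)) (by exact_mod_cast (zero_lt_one.trans_le hp).ne') (t₀ : ℚ) P
  refine ⟨Q, hQdeg.trans (natDegree_le_of_degree_le hPdeg.le), fun u hu => ?_⟩
  rw [← hP u hu, ← hQ]
  push_cast
  rfl

lemma exists_card_le_in_residue_class {h : ℤ[X][X]} (hh : h.Monic)
    (hno_root : ∀ P : ℚ[X], (h.map (mapRingHom (Int.castRingHom ℚ))).eval P ≠ 0) (t₀ : ℤ) :
    ∃ E : ℕ, ∀ U : Finset ℤ, ∀ᶠ p : ℕ in atTop, ∀ x₀ c : ℤ, ↑p ∣ h.evalEval t₀ x₀ →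
      ↑p ∣ c * h.derivative.evalEval t₀ x₀ - 1 → ∀ V ⊆ U,
        (∀ u ∈ V, ∃ x : ℤ, ↑p ∣ x - x₀ ∧ h.evalEval (t₀ + p * u) x = 0) → #V ≤ E := by
  obtain ⟨n, hinterp⟩ := exists_interpolation_of_roots hh t₀
  obtain ⟨E, hE⟩ := exists_card_le_of_forall_evalEval_eq_zero hno_root n
  refine ⟨max n E, fun U => ?_⟩
  filter_upwards [hinterp U, eventually_gt_atTop 0] with p hp hp0 x₀ c hroot hderiv V hVU hV
  choose! x hx_near hx_root using hV
  rcases lt_or_ge #V n with hlt | hge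
  · exact hlt.le.trans (le_max_left _ _)
  obtain ⟨P, hPdeg, hP⟩ := hp x₀ c hroot hderiv V hVU hge x hx_near hx_root
  have hinj : Function.Injective fun u : ℤ => ((t₀ + p * u : ℤ) : ℚ) := fun u v huv => by
    simpa [hp0.ne'] using huv
  rw [← Finset.card_image_of_injective V hinj]
  refine (hE P hPdeg _ fun t ht => ?_).trans (le_max_right _ _)
  obtain ⟨u, hu, rfl⟩ := Finset.mem_image.mp ht
  rw [hP u hu]
  simpa [hx_root u hu] using
    map_mapRingHom_evalEval (Int.castRingHom ℚ) h (t₀ + p * u) (x u)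

lemma dvd_evalEval_of_evalEval_add_mul_eq_zero {h : ℤ[X][X]} {p t₀ u x : ℤ}
    (hx : h.evalEval (t₀ + p * u) x = 0) : p ∣ h.evalEval t₀ x :=
  (dvd_eval_add_mul_iff (h.eval (C x))).mp (Dvd.intro_left 0 ((zero_mul p).trans hx.symm))

lemma exists_dvd_mul_derivative_sub_one {q a b : ℤ[X]} {D p x₀ : ℤ}
    (hbezout : a * q + b * q.derivative = C D) (hD : IsCoprime D p) (hroot : p ∣ q.eval x₀) :
    ∃ c : ℤ, p ∣ c * q.derivative.eval x₀ - 1 := by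
  obtain ⟨d, e, hde⟩ := hD
  obtain ⟨r, hr⟩ := hroot
  have hval : a.eval x₀ * q.eval x₀ + b.eval x₀ * q.derivative.eval x₀ = D := by
    rw [← eval_mul, ← eval_mul, ← eval_add, hbezout, eval_C]
  refine ⟨d * b.eval x₀, -(e + d * a.eval x₀ * r), ?_⟩
  rw [hr] at hval
  linear_combination d * hval + hde

lemma exists_card_le_on_progression {h : ℤ[X][X]} (hh : h.Monic)
    (hno_root : ∀ P : ℚ[X], (h.map (mapRingHom (Int.castRingHom ℚ))).eval P ≠ 0) {t₀ : ℤ}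
    (hsep : ((h.map (evalRingHom t₀)).map (algebraMap ℤ ℚ)).Separable) :
    ∃ E : ℕ, ∀ U : Finset ℤ, ∀ᶠ p : ℕ in atTop, p.Prime → ∀ V ⊆ U,
      (∀ u ∈ V, ∃ x : ℤ, h.evalEval (t₀ + p * u) x = 0) → #V ≤ E := by
  obtain ⟨a, b, D, hD, hbezout⟩ := exists_bezout_of_separable hsep
  obtain ⟨E, hE⟩ := exists_card_le_in_residue_class hh hno_root t₀
  refine ⟨E * h.natDegree, fun U => ?_⟩
  filter_upwards [hE U, eventually_gt_atTop D.natAbs] with p hp hpD hprime V hVU hV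
  have : Fact p.Prime := ⟨hprime⟩
  have hDp : IsCoprime D p := by
    rw [Int.isCoprime_iff_nat_coprime, Int.natAbs_natCast]
    exact (Nat.coprime_of_lt_prime (Int.natAbs_ne_zero.mpr hD) hpD hprime).symm
  choose! x hx using hV
  let q : (ZMod p)[X] := (h.map (evalRingHom t₀)).map (Int.castRingHom (ZMod p))
  have hq : q.Monic := (hh.map _).map _
  have hroot (u : ℤ) (hu : u ∈ V) : ↑p ∣ h.evalEval t₀ (x u) :=
    dvd_evalEval_of_evalEval_add_mul_eq_zero (hx u hu)
  have hmaps (u : ℤ) (hu : u ∈ V) : (x u : ZMod p) ∈ q.roots.toFinset := by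
    rw [Multiset.mem_toFinset, mem_roots hq.ne_zero, IsRoot.def, eval_intCast_map,
      map_evalRingHom_eval]
    exact (ZMod.intCast_zmod_eq_zero_iff_dvd _ p).mpr (hroot u hu)
  have hfiber (r : ZMod p) : #{u ∈ V | (x u : ZMod p) = r} ≤ E := by
    rcases Finset.eq_empty_or_nonempty {u ∈ V | (x u : ZMod p) = r} with hempty | ⟨u₀, hu₀⟩
    · simp [hempty]
    obtain ⟨hu₀V, rfl⟩ := Finset.mem_filter.mp hu₀
    obtain ⟨c, hc⟩ := exists_dvd_mul_derivative_sub_one hbezout hDp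
      (by rw [map_evalRingHom_eval]; exact hroot u₀ hu₀V)
    rw [derivative_map, map_evalRingHom_eval] at hc
    refine hp _ c (hroot u₀ hu₀V) hc _ ((Finset.filter_subset _ V).trans hVU) fun u hu => ?_
    obtain ⟨huV, hux⟩ := Finset.mem_filter.mp hu
    exact ⟨x u, (ZMod.intCast_eq_intCast_iff_dvd_sub _ _ p).mp hux.symm, hx u huV⟩
  calc #V ≤ E * #q.roots.toFinset :=
        Finset.card_le_mul_card_image_of_maps_to hmaps E fun r _ => hfiber r
    _ ≤ E * h.natDegree := by
        gcongr
        refine (Multiset.toFinset_card_le _).trans ((card_roots' q).trans_eq ?_)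
        rw [(hh.map _).natDegree_map, hh.natDegree_map]

open scoped Classical in
theorem exists_specialization_without_roots {ι : Type*} [Finite ι] {h : ι → ℤ[X][X]} {t₀ : ℤ}
    (hh : ∀ i, (h i).Monic)
    (hno_root : ∀ i, ∀ P : ℚ[X], ((h i).map (mapRingHom (Int.castRingHom ℚ))).eval P ≠ 0)
    (hsep : ∀ i, (((h i).map (evalRingHom t₀)).map (algebraMap ℤ ℚ)).Separable)
    {d : ℚ[X]} (hd : d ≠ 0) :
    ∃ a : ℤ, d.eval (a : ℚ) ≠ 0 ∧ ∀ i, ∀ x : ℤ, (h i).evalEval a x ≠ 0 := by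
  cases nonempty_fintype ι
  choose E hE using fun i => exists_card_le_on_progression (hh i) (hno_root i) (hsep i)
  let U : Finset ℤ := (Finset.range (∑ i, E i + d.natDegree + 1)).map Nat.castEmbedding
  obtain ⟨p, hprime, hp⟩ := (Nat.frequently_atTop_iff_infinite.mpr
    Nat.infinite_setOfPred_prime).and_eventually (eventually_all.mpr fun i => hE i U) |>.exists
  have hinj : Function.Injective fun u : ℤ => ((t₀ + p * u : ℤ) : ℚ) := fun u v huv => by
    simpa [hprime.ne_zero] using huv
  let bad (i : ι) : Finset ℤ := {u ∈ U | ∃ x : ℤ, (h i).evalEval (t₀ + p * u) x = 0}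
  let zeros : Finset ℤ := {u ∈ U | d.eval ((t₀ + p * u : ℤ) : ℚ) = 0}
  have hbad (i : ι) : #(bad i) ≤ E i := hp i hprime _ (Finset.filter_subset _ U) fun u hu =>
    (Finset.mem_filter.mp hu).2
  have hzeros : #zeros ≤ d.natDegree := by
    rw [← Finset.card_image_of_injective zeros hinj]
    refine card_le_degree_of_subset_roots fun t ht => (mem_roots hd).mpr ?_
    obtain ⟨u, hu, rfl⟩ := Finset.mem_image.mp (Finset.mem_val.mp ht)
    exact (Finset.mem_filter.mp hu).2
  have hcard : #(Finset.univ.biUnion bad ∪ zeros) < #U := calc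
    #(Finset.univ.biUnion bad ∪ zeros) ≤ ∑ i, E i + d.natDegree :=
      (Finset.card_union_le _ _).trans <| add_le_add
        (Finset.card_biUnion_le.trans (Finset.sum_le_sum fun i _ => hbad i)) hzeros
    _ < #U := by simp [U]
  obtain ⟨u, huU, hu⟩ := Finset.exists_mem_notMem_of_card_lt_card hcard
  simp only [Finset.mem_union, Finset.mem_biUnion, Finset.mem_univ, true_and, not_or,
    not_exists, bad, zeros, Finset.mem_filter, not_and] at hu
  exact ⟨t₀ + p * u, hu.2 huU, fun i x => hu.1 i huU x⟩

/-! ### Avoiding rational roots -/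

attribute [local instance] Polynomial.algebra Polynomial.isLocalization in
lemma exists_monic_map_eq_scaleRoots {R S : Type*} [CommRing R] [CommRing S] [Algebra R S]
    (M : Submonoid R) [IsLocalization M S] {g : S[X][X]} (hg : g.Monic) :
    ∃ m ∈ M, ∃ h : R[X][X], h.Monic ∧
      h.map (mapRingHom (algebraMap R S)) = g.scaleRoots (C (algebraMap R S m)) := by
  have hlifts := IsLocalization.scaleRoots_commonDenom_mem_lifts (M.map C) g
    (hg.leadingCoeff ▸ one_mem _)
  obtain ⟨h, hmap, -, hh⟩ :=
    lifts_and_natDegree_eq_and_monic hlifts ((monic_scaleRoots_iff _).mpr hg)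
  obtain ⟨m, hm, hdenom⟩ :=
    (IsLocalization.commonDenom (M.map (C : R →+* R[X])) g.support g.coeff).2
  refine ⟨m, hm, h, hh, hmap.trans ?_⟩
  rw [← hdenom]
  exact congrArg g.scaleRoots (map_C _)

lemma derivative_scaleRoots {R : Type*} [CommRing R] [IsDomain R] [CharZero R] (p : R[X]) (r : R) :
    derivative (p.scaleRoots r) = (derivative p).scaleRoots r := by
  ext i
  simp only [coeff_derivative, coeff_scaleRoots, natDegree_derivative]
  rw [Nat.sub_sub, add_comm 1 i]
  ring

lemma separable_scaleRoots {F : Type*} [Field F] [CharZero F] {p : F[X]} (hp : p.Separable) {r : F}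
    (hr : r ≠ 0) : (p.scaleRoots r).Separable := by
  rw [separable_def, derivative_scaleRoots]
  exact isCoprime_scaleRoots _ _ _ hr.isUnit hp

lemma exists_intCast_eval_ne_zero {F : Type*} [Field F] [CharZero F] {d : F[X]} (hd : d ≠ 0) :
    ∃ t : ℤ, d.eval (t : F) ≠ 0 := by
  by_contra! hzero
  exact hd (eq_zero_of_infinite_isRoot d
    ((Set.infinite_range_of_injective Int.cast_injective).mono (Set.range_subset_iff.mpr hzero)))

lemma map_evalRingHom_map_intCast (h : ℤ[X][X]) (t : ℤ) :
    (h.map (evalRingHom t)).map (Int.castRingHom ℚ) =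
      (h.map (mapRingHom (Int.castRingHom ℚ))).map (evalRingHom (t : ℚ)) := by
  rw [Polynomial.map_map, Polynomial.map_map]
  congr 1
  ext <;> simp

lemma exists_intCast_eq_of_isRoot {q : ℤ[X]} (hq : q.Monic) {r : ℚ}
    (hr : (q.map (Int.castRingHom ℚ)).IsRoot r) : ∃ x : ℤ, (x : ℚ) = r ∧ q.eval x = 0 := by
  have hint : IsIntegral ℤ r := ⟨q, hq, by rwa [← eval_map]⟩
  obtain ⟨x, rfl⟩ := IsIntegrallyClosed.isIntegral_iff.mp hint
  refine ⟨x, rfl, ?_⟩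
  simpa using hr

lemma map_scaleRoots_of_monic {R S : Type*} [CommRing R] [CommRing S] [Nontrivial S] {p : R[X]}
    (hp : p.Monic) (r : R) (φ : R →+* S) :
    (p.scaleRoots r).map φ = (p.map φ).scaleRoots (φ r) :=
  map_scaleRoots p r φ (by simp [hp.leadingCoeff])

lemma eval_scaleRoots_ne_zero {R : Type*} [CommRing R] [IsDomain R] {p : R[X]} {r : R}
    (hr : IsUnit r) (hp : ∀ x, p.eval x ≠ 0) (x : R) : (p.scaleRoots r).eval x ≠ 0 := by
  obtain ⟨y, rfl⟩ := hr.dvd (a := x)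
  rw [scaleRoots_eval_mul]
  exact mul_ne_zero (pow_ne_zero _ hr.ne_zero) (hp y)

theorem exists_specialization_without_rational_roots {K ι : Type*} [Field K] [Algebra ℚ[X] K]
    [IsFractionRing ℚ[X] K] [Finite ι] {g : ι → ℚ[X][X]} (hg : ∀ i, (g i).Monic)
    (hno_root : ∀ i, ∀ P : ℚ[X], (g i).eval P ≠ 0)
    (hsep : ∀ i, ((g i).map (algebraMap ℚ[X] K)).Separable) {d : ℚ[X]} (hd : d ≠ 0) :
    ∃ a : ℚ, d.eval a ≠ 0 ∧ ∀ i, ∀ r : ℚ, ¬ ((g i).map (evalRingHom a)).IsRoot r := by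
  cases nonempty_fintype ι
  choose A B D hD hbezout using fun i => exists_bezout_of_separable (hsep i)
  have hprod : ∏ i, D i ≠ 0 := Finset.prod_ne_zero_iff.mpr fun i _ => hD i
  obtain ⟨t₀, ht₀⟩ := exists_intCast_eval_ne_zero hprod
  rw [eval_prod, Finset.prod_ne_zero_iff] at ht₀
  choose m hm h hh hmap using fun i => exists_monic_map_eq_scaleRoots (nonZeroDivisors ℤ) (hg i)
  have hm_ne (i : ι) : (m i : ℚ) ≠ 0 := Int.cast_ne_zero.mpr (nonZeroDivisors.ne_zero (hm i))
  have hmap_eval (i : ι) (t : ℤ) : ((h i).map (evalRingHom t)).map (Int.castRingHom ℚ) =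
      ((g i).map (evalRingHom (t : ℚ))).scaleRoots (m i) := by
    rw [map_evalRingHom_map_intCast]
    refine (congrArg (Polynomial.map _) (hmap i)).trans ?_
    rw [map_scaleRoots_of_monic (hg i), coe_evalRingHom, eval_C]
    rfl
  have hno_root' (i : ι) (P : ℚ[X]) :
      ((h i).map (mapRingHom (Int.castRingHom ℚ))).eval P ≠ 0 := by
    refine (congrArg (eval P) (hmap i)).trans_ne ?_
    exact eval_scaleRoots_ne_zero (isUnit_C.mpr (hm_ne i).isUnit) (hno_root i) P
  have hsep' (i : ι) : (((h i).map (evalRingHom t₀)).map (algebraMap ℤ ℚ)).Separable := by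
    refine (hmap_eval i t₀).symm ▸ separable_scaleRoots ?_ (hm_ne i)
    exact separable_map_of_bezout _ (hbezout i) (ht₀ i (Finset.mem_univ i))
  obtain ⟨a, hda, ha⟩ := exists_specialization_without_roots hh hno_root' hsep' hd
  refine ⟨a, hda, fun i r hr => ?_⟩
  have hroot : (((h i).map (evalRingHom a)).map (Int.castRingHom ℚ)).IsRoot (m i * r) := by
    rw [hmap_eval, IsRoot.def, scaleRoots_eval_mul, hr.eq_zero, mul_zero]
  obtain ⟨x, -, hx⟩ := exists_intCast_eq_of_isRoot ((hh i).map (evalRingHom a)) hroot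
  exact ha i x (by rwa [← map_evalRingHom_eval])

/-! ### Reduction of Galois groups -/

/-- A reduction `π : B → N` of a ring `B` over `A` with an action of `H`, lying above `ev : A → F`,
together with the induced homomorphism `S` from `H` onto `Gal(N/F)`. The case in mind is the residue
field extension at a prime of `B`, with `H` its decomposition group. -/
structure IsGaloisReduction {A B F N H : Type*} [CommRing A] [CommRing B] [Algebra A B] [Field F]
    [Field N] [Algebra F N] [Group H] [MulSemiringAction H B] (ev : A →+* F) (π : B →+* N)
    (S : H →* Gal(N/F)) : Prop where
  comp_algebraMap : π.comp (algebraMap A B) = (algebraMap F N).comp ev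
  surjective : Function.Surjective S
  apply_smul : ∀ σ b, S σ (π b) = π (σ • b)

namespace IsGaloisReduction

variable {A B F N H : Type*} [CommRing A] [CommRing B] [Algebra A B] [Field F] [Field N]
  [Algebra F N] [Group H] [MulSemiringAction H B] {ev : A →+* F} {π : B →+* N}
  {S : H →* Gal(N/F)}

lemma map_map_evaluation (hred : IsGaloisReduction ev π S) (f : A[X]) :
    (f.map ev).map (algebraMap F N) = (f.map (algebraMap A B)).map π := by
  rw [Polynomial.map_map, Polynomial.map_map, hred.comp_algebraMap]

lemma exists_isRoot_map [IsGalois F N] (hred : IsGaloisReduction ev π S) {c : B}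
    (hfixed : ∀ σ : H, σ • c = c) {g : A[X]} (hroot : aeval c g = 0) :
    ∃ r : F, (g.map ev).IsRoot r := by
  have hπc (τ : Gal(N/F)) : τ (π c) = π c := by
    obtain ⟨σ, rfl⟩ := hred.surjective τ
    rw [hred.apply_smul, hfixed]
  obtain ⟨r, hr⟩ := (InfiniteGalois.mem_range_algebraMap_iff_fixed (π c)).mpr hπc
  refine ⟨r, (algebraMap F N).injective ?_⟩
  rw [map_zero, ← eval_map_apply, hr, hred.map_map_evaluation, eval_map_apply,
    eval_map_algebraMap, hroot, map_zero]

lemma exists_of_eq_top {D : Subgroup H} {S : D →* Gal(N/F)} (hred : IsGaloisReduction ev π S)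
    (hD : D = ⊤) : ∃ S' : H →* Gal(N/F), IsGaloisReduction ev π S' := by
  subst hD
  let e : H ≃* (⊤ : Subgroup H) := Subgroup.topEquiv.symm
  exact ⟨S.comp e.toMonoidHom, hred.comp_algebraMap, hred.surjective.comp e.surjective,
    fun σ => hred.apply_smul (e σ)⟩

section Roots

variable [IsDomain B] {f : A[X]}

lemma roots_map (hred : IsGaloisReduction ev π S) (hf : f.Monic)
    (hsplit : (f.map (algebraMap A B)).Splits) :
    ((f.map ev).map (algebraMap F N)).roots = (f.map (algebraMap A B)).roots.map π := by
  rw [hred.map_map_evaluation]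
  exact hsplit.roots_map_of_ne_zero ((hf.map _).map π).ne_zero

theorem irreducible_map [IsGalois F N] (hred : IsGaloisReduction ev π S) (hf : f.Monic)
    (hsplit : (f.map (algebraMap A B)).Splits) (hsep : (f.map ev).Separable)
    (hne : f.natDegree ≠ 0)
    (htrans : ∀ x ∈ (f.map (algebraMap A B)).roots, ∀ y ∈ (f.map (algebraMap A B)).roots,
      ∃ σ : H, σ • x = y) :
    Irreducible (f.map ev) := by
  have hroots := hred.roots_map hf hsplit
  obtain ⟨x, hx⟩ := Multiset.exists_mem_of_ne_zero
    (hsplit.roots_ne_zero (by rwa [hf.natDegree_map]))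
  have hint : IsIntegral F (π x) := Algebra.IsIntegral.isIntegral _
  have hmin_dvd : minpoly F (π x) ∣ f.map ev := minpoly.dvd _ _ <| by
    have hπx := hroots ▸ Multiset.mem_map_of_mem π hx
    simpa only [IsRoot.def, eval_map_algebraMap] using isRoot_of_mem_roots hπx
  have hdvd_min : f.map ev ∣ minpoly F (π x) := by
    have hfsplit : ((f.map ev).map (algebraMap F N)).Splits := by
      rw [hred.map_map_evaluation]
      exact hsplit.map π
    rw [← map_dvd_map' (algebraMap F N), hfsplit.eq_prod_roots_of_monic ((hf.map ev).map _),
      Multiset.prod_X_sub_C_dvd_iff_le_roots ((minpoly.monic hint).map _).ne_zero,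
      Multiset.le_iff_subset (nodup_roots hsep.map), hroots]
    intro z hz
    obtain ⟨y, hy, rfl⟩ := Multiset.mem_map.mp hz
    obtain ⟨σ, rfl⟩ := htrans x hx y hy
    rw [mem_roots ((minpoly.monic hint).map _).ne_zero, IsRoot.def, eval_map_algebraMap,
      ← hred.apply_smul, ← AlgEquiv.coe_toAlgHom, aeval_algHom_apply, minpoly.aeval, map_zero]
  rw [eq_of_monic_of_associated (hf.map ev) (minpoly.monic hint)
    (associated_of_dvd_dvd hdvd_min hmin_dvd)]
  exact minpoly.irreducible hint

lemma smul_mem_roots [SMulCommClass H A B] (hf : f.Monic) (σ : H) {x : B}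
    (hx : x ∈ (f.map (algebraMap A B)).roots) : σ • x ∈ (f.map (algebraMap A B)).roots := by
  rw [mem_roots (hf.map _).ne_zero, IsRoot.def, eval_map_algebraMap] at hx ⊢
  exact (aeval_algHom_apply (MulSemiringAction.toAlgHom A B σ) x f).trans (by rw [hx, map_zero])

theorem nonempty_gal_mulEquiv [IsGalois F N] [SMulCommClass H A B]
    (hred : IsGaloisReduction ev π S) (hf : f.Monic)
    (hsplit : (f.map (algebraMap A B)).Splits) (hsep : (f.map ev).Separable)
    (hfaithful : ∀ σ : H, (∀ x ∈ (f.map (algebraMap A B)).roots, σ • x = x) → σ = 1) :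
    Nonempty ((f.map ev).Gal ≃* H) := by
  have hroots := hred.roots_map hf hsplit
  have : Fact ((f.map ev).map (algebraMap F N)).Splits := ⟨by
    rw [hred.map_map_evaluation]
    exact hsplit.map π⟩
  let φ : H →* (f.map ev).Gal := (Gal.restrict (f.map ev) N).comp S
  have hsurj : Function.Surjective φ := (Gal.restrict_surjective _ N).comp hred.surjective
  have hinj : Function.Injective φ := by
    refine (injective_iff_map_eq_one φ).mpr fun σ hσ => hfaithful σ fun x hx => ?_
    have hπx : π x ∈ (f.map ev).rootSet N := by
      rw [mem_rootSet', ← eval_map_algebraMap]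
      exact mem_roots'.mp (hroots ▸ Multiset.mem_map_of_mem π hx)
    have hfix : S σ (π x) = π x := by
      have hrestrict := Gal.restrict_smul (S σ) (⟨π x, hπx⟩ : (f.map ev).rootSet N)
      rw [← hrestrict, show Gal.restrict (f.map ev) N (S σ) = 1 from hσ, one_smul]
    have hnodup : ((f.map (algebraMap A B)).roots.map π).Nodup := hroots ▸ nodup_roots hsep.map
    exact Multiset.inj_on_of_nodup_map hnodup _ (smul_mem_roots hf σ hx) _ hx
      ((hred.apply_smul σ x).symm.trans hfix)
  exact ⟨(MulEquiv.ofBijective φ ⟨hinj, hsurj⟩).symm⟩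

end Roots

end IsGaloisReduction

open scoped Pointwise in
theorem exists_isGaloisReduction_subgroup {A F G : Type*} {B : Type u} [CommRing A] [CommRing B]
    [Algebra A B] [FaithfulSMul A B] [Field F] [PerfectField F] [Group G] [Finite G]
    [MulSemiringAction G B] [SMulCommClass G A B] [Algebra.IsInvariant A B G]
    {ev : A →+* F} (hev : Function.Surjective ev) :
    ∃ (N : Type u) (_ : Field N) (_ : Algebra F N) (_ : IsGalois F N) (π : B →+* N)
      (D : Subgroup G) (S : D →* Gal(N/F)), IsGaloisReduction ev π S := by
  let P : Ideal A := RingHom.ker ev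
  have : P.IsMaximal := RingHom.ker_isMaximal_of_surjective ev hev
  have : Algebra.IsIntegral A B := Algebra.IsInvariant.isIntegral A B G
  obtain ⟨Q, hQ, hQP⟩ := Ideal.exists_maximal_ideal_liesOver_of_isIntegral (S := B) P
  let : Field (B ⧸ Q) := Ideal.Quotient.field Q
  let e : A ⧸ P ≃+* F := RingHom.quotientKerEquivOfSurjective hev
  let : Algebra (A ⧸ P) F := e.toRingHom.toAlgebra
  let : Algebra F (B ⧸ Q) := ((algebraMap (A ⧸ P) (B ⧸ Q)).comp e.symm.toRingHom).toAlgebra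
  have : IsScalarTower (A ⧸ P) F (B ⧸ Q) := IsScalarTower.of_algebraMap_eq fun x =>
    congrArg (algebraMap (A ⧸ P) (B ⧸ Q)) (e.symm_apply_apply x).symm
  have : FaithfulSMul (A ⧸ P) F :=
    (faithfulSMul_iff_algebraMap_injective _ _).mpr e.injective
  have : IsFractionRing (A ⧸ P) F := IsFractionRing.of_field (A ⧸ P) F fun z =>
    ⟨e.symm z, 1, by rw [map_one, div_one]; exact (e.apply_symm_apply z).symm⟩
  have : Normal F (B ⧸ Q) := Ideal.IsFractionRing.normal G P Q F (B ⧸ Q)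
  refine ⟨B ⧸ Q, _, _, ⟨⟩, Ideal.Quotient.mk Q, MulAction.stabilizer G Q,
    IsFractionRing.stabilizerHom G P Q F (B ⧸ Q), ?_,
    IsFractionRing.stabilizerHom_surjective G P Q F (B ⧸ Q),
    IsFractionRing.stabilizerHom_apply_apply_mk G P Q F (B ⧸ Q)⟩
  ext q
  have hsymm : e.symm (ev q) = Ideal.Quotient.mk P q := e.symm_apply_apply (Ideal.Quotient.mk P q)
  exact (congrArg (algebraMap (A ⧸ P) (B ⧸ Q)) hsymm).symm

section IntegralClosure

variable {A K L : Type*} [CommRing A] [Field K] [Algebra A K] [Field L] [Algebra K L] [Algebra A L]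

lemma faithfulSMul_integralClosure [FaithfulSMul A L] : FaithfulSMul A (integralClosure A L) := by
  rw [faithfulSMul_iff_algebraMap_injective]
  exact .of_comp (f := Subtype.val) (FaithfulSMul.algebraMap_injective A L)

lemma splits_integralClosure {f : A[X]} (hf : f.Monic) (hsplit : (f.map (algebraMap A L)).Splits) :
    (f.map (algebraMap A (integralClosure A L))).Splits := by
  have hmap : (f.map (algebraMap A (integralClosure A L))).map (algebraMap (integralClosure A L) L)
      = f.map (algebraMap A L) := by
    rw [Polynomial.map_map, ← IsScalarTower.algebraMap_eq]
  refine Splits.of_splits_map_of_injective (i := algebraMap (integralClosure A L) L)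
    Subtype.val_injective (hmap ▸ hsplit) fun x hx => ?_
  rw [hmap, mem_roots (hf.map _).ne_zero, IsRoot.def, eval_map] at hx
  exact ⟨⟨x, f, hf, hx⟩, rfl⟩

variable [IsScalarTower A K L]

lemma exists_smul_eq_of_mem_roots [IsGalois K L] {f : A[X]} (hf : f.Monic)
    (hirr : Irreducible (f.map (algebraMap A K))) {x y : integralClosure A L}
    (hx : x ∈ (f.map (algebraMap A (integralClosure A L))).roots)
    (hy : y ∈ (f.map (algebraMap A (integralClosure A L))).roots) :
    ∃ σ : Gal(L/K), σ • x = y := by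
  have hminpoly {z : integralClosure A L}
      (hz : z ∈ (f.map (algebraMap A (integralClosure A L))).roots) :
      f.map (algebraMap A K) = minpoly K (z : L) := by
    refine minpoly.eq_of_irreducible_of_monic hirr ?_ (hf.map _)
    have hroot : aeval z f = 0 := by simpa using isRoot_of_mem_roots hz
    rw [aeval_map_algebraMap]
    exact (aeval_algebraMap_apply L z f).trans (by rw [hroot, map_zero])
  obtain ⟨σ, hσ⟩ := isConjRoot_iff_exists_algEquiv.mp ((hminpoly hy).symm.trans (hminpoly hx))
  exact ⟨σ, Subtype.ext hσ⟩

lemma eq_one_of_forall_roots_smul_eq {f : A[X]} (hf : f.Monic)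
    [IsSplittingField K L (f.map (algebraMap A K))] {σ : Gal(L/K)}
    (hσ : ∀ x ∈ (f.map (algebraMap A (integralClosure A L))).roots, σ • x = x) : σ = 1 := by
  have hroot (x : L) (hx : x ∈ (f.map (algebraMap A K)).rootSet L) : σ x = x := by
    have hx₀ : aeval x f = 0 := by simpa using (mem_rootSet'.mp hx).2
    let b : integralClosure A L := ⟨x, f, hf, hx₀⟩
    refine congrArg Subtype.val (hσ b ?_)
    rw [mem_roots (hf.map _).ne_zero, IsRoot.def, eval_map_algebraMap]
    exact Subtype.ext ((aeval_algebraMap_apply L b f).symm.trans hx₀)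
  refine AlgEquiv.coe_toAlgHom_injective ?_
  exact AlgHom.ext_of_adjoin_eq_top
    (IsSplittingField.adjoin_rootSet L (f.map (algebraMap A K))) hroot

section IsFractionRing

variable [IsFractionRing A K]

lemma isInvariant_integralClosure [IsIntegrallyClosed A] [IsGalois K L] :
    Algebra.IsInvariant A (integralClosure A L) Gal(L/K) where
  isInvariant b hb := by
    obtain ⟨k, hk⟩ := (InfiniteGalois.mem_range_algebraMap_iff_fixed (b : L)).mpr
      fun σ => congrArg Subtype.val (hb σ)
    have hint : IsIntegral A k := (isIntegral_algebraMap_iff (algebraMap K L).injective).mp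
      (hk ▸ b.2)
    obtain ⟨x, rfl⟩ := IsIntegrallyClosed.algebraMap_eq_of_integral hint
    exact ⟨x, Subtype.ext ((IsScalarTower.algebraMap_apply A K L x).trans hk)⟩

lemma exists_integral_fixed_notMem_range [IsDomain A] [FiniteDimensional K L]
    [IsGalois K L] {H : Subgroup Gal(L/K)} (hH : H ≠ ⊤) :
    ∃ c : L, IsIntegral A c ∧ (∀ σ ∈ H, σ c = c) ∧ c ∉ Set.range (algebraMap K L) := by
  obtain ⟨y, hyH, hy⟩ : ∃ y ∈ IntermediateField.fixedField H, y ∉ Set.range (algebraMap K L) := by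
    by_contra! hrange
    refine hH (eq_top_iff.mpr fun σ _ => ?_)
    rw [← IntermediateField.fixingSubgroup_fixedField H, IntermediateField.mem_fixingSubgroup_iff]
    intro y hy
    obtain ⟨k, rfl⟩ := hrange y hy
    exact σ.commutes k
  have : Algebra.IsAlgebraic A L :=
    (IsFractionRing.comap_isAlgebraic_iff (A := A) (K := K)).mpr inferInstance
  obtain ⟨w, hw, hint⟩ := (Algebra.IsAlgebraic.isAlgebraic (R := A) y).exists_integral_multiple
  refine ⟨w • y, hint, fun σ hσ => ?_, ?_⟩
  · rw [← algebraMap_smul K w y, map_smul, (IntermediateField.mem_fixedField_iff H y).mp hyH σ hσ]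
  · rintro ⟨k, hk⟩
    have hwK : algebraMap A K w ≠ 0 := by simpa using hw
    refine hy ⟨(algebraMap A K w)⁻¹ * k, ?_⟩
    rw [map_mul, hk, ← algebraMap_smul K w y, Algebra.smul_def, ← mul_assoc, ← map_mul,
      inv_mul_cancel₀ hwK, map_one, one_mul]

lemma minpoly_eval_ne_zero_of_notMem_range [IsDomain A] [IsIntegrallyClosed A] {c : L}
    (hint : IsIntegral A c) (hc : c ∉ Set.range (algebraMap K L)) (P : A) :
    (minpoly A c).eval P ≠ 0 := by
  intro hP
  have hroot : (minpoly K c).IsRoot (algebraMap A K P) := by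
    rw [minpoly.isIntegrallyClosed_eq_field_fractions' K hint, IsRoot.def, eval_map_apply, hP,
      map_zero]
  exact hc <| minpoly.mem_range_of_degree_eq_one K c <|
    degree_eq_one_of_irreducible_of_root (minpoly.irreducible hint.tower_top) hroot

end IsFractionRing

end IntegralClosure

theorem exists_isGaloisReduction {K : Type*} {L : Type u} [Field K] [Algebra ℚ[X] K]
    [IsFractionRing ℚ[X] K] [Field L] [Algebra K L] [Algebra ℚ[X] L] [IsScalarTower ℚ[X] K L]
    [FiniteDimensional K L] [IsGalois K L] {d : ℚ[X]} (hd : d ≠ 0) :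
    ∃ a : ℚ, d.eval a ≠ 0 ∧ ∃ (N : Type u) (_ : Field N) (_ : Algebra ℚ N) (_ : IsGalois ℚ N)
      (π : integralClosure ℚ[X] L →+* N) (S : Gal(L/K) →* Gal(N/ℚ)),
      IsGaloisReduction (evalRingHom a) π S := by
  have : FaithfulSMul ℚ[X] L := .trans ℚ[X] K L
  have : FaithfulSMul ℚ[X] (integralClosure ℚ[X] L) := faithfulSMul_integralClosure
  have : Algebra.IsInvariant ℚ[X] (integralClosure ℚ[X] L) Gal(L/K) := isInvariant_integralClosure
  have : CharZero K := charZero_of_injective_algebraMap (IsFractionRing.injective ℚ[X] K)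
  choose c hint hfixed hc using fun H : {H : Subgroup Gal(L/K) // H ≠ ⊤} =>
    exists_integral_fixed_notMem_range (A := ℚ[X]) H.2
  have hsep (H) : ((minpoly ℚ[X] (c H)).map (algebraMap ℚ[X] K)).Separable := by
    rw [← minpoly.isIntegrallyClosed_eq_field_fractions' K (hint H)]
    exact (minpoly.irreducible (hint H).tower_top).separable
  obtain ⟨a, hda, ha⟩ := exists_specialization_without_rational_roots
    (fun H => minpoly.monic (hint H))
    (fun H => minpoly_eval_ne_zero_of_notMem_range (hint H) (hc H)) hsep hd
  obtain ⟨N, _, _, _, π, D, S, hred⟩ := exists_isGaloisReduction_subgroup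
    (A := ℚ[X]) (B := integralClosure ℚ[X] L) (G := Gal(L/K)) (ev := evalRingHom a)
    fun r => ⟨C r, eval_C⟩
  have hD : D = ⊤ := by
    by_contra hD
    let b : integralClosure ℚ[X] L := ⟨c ⟨D, hD⟩, hint ⟨D, hD⟩⟩
    have hroot : aeval b (minpoly ℚ[X] (c ⟨D, hD⟩)) = 0 :=
      Subtype.ext ((aeval_algebraMap_apply L b _).symm.trans (minpoly.aeval _ _))
    obtain ⟨r, hr⟩ := hred.exists_isRoot_map
      (fun σ => Subtype.ext (hfixed ⟨D, hD⟩ σ σ.2)) hroot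
    exact ha _ r hr
  obtain ⟨S', hred'⟩ := hred.exists_of_eq_top hD
  exact ⟨a, hda, N, _, _, ‹_›, π, S', hred'⟩

theorem galoisGroup_specialization_general {K : Type*} [Field K] [Algebra ℚ[X] K]
    [IsFractionRing ℚ[X] K] {f : ℚ[X][X]} (hmonic : f.Monic)
    (hsep : (f.map (algebraMap ℚ[X] K)).Separable) :
    ∃ a : ℚ,
      (Irreducible (f.map (algebraMap ℚ[X] K)) → Irreducible (f.map (evalRingHom a))) ∧
      Nonempty ((f.map (evalRingHom a)).Gal ≃* (f.map (algebraMap ℚ[X] K)).Gal) := by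
  let L := (f.map (algebraMap ℚ[X] K)).SplittingField
  have : IsGalois K L := IsGalois.of_separable_splitting_field hsep
  obtain ⟨A, B, d, hd, hbezout⟩ := exists_bezout_of_separable hsep
  obtain ⟨a, hda, N, _, _, _, π, S, hred⟩ := exists_isGaloisReduction (K := K) (L := L) hd
  have hsep_a : (f.map (evalRingHom a)).Separable := separable_map_of_bezout _ hbezout hda
  have hsplit : (f.map (algebraMap ℚ[X] (integralClosure ℚ[X] L))).Splits := by
    refine splits_integralClosure hmonic ?_
    rw [IsScalarTower.algebraMap_eq ℚ[X] K L, ← Polynomial.map_map]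
    exact SplittingField.splits _
  refine ⟨a, fun hirr => ?_, ?_⟩
  · refine hred.irreducible_map hmonic hsplit hsep_a ?_ fun x hx y hy =>
      exists_smul_eq_of_mem_roots hmonic hirr hx hy
    exact hmonic.natDegree_map (algebraMap ℚ[X] K) ▸ hirr.natDegree_pos.ne'
  · exact hred.nonempty_gal_mulEquiv hmonic hsplit hsep_a fun σ =>
      eq_one_of_forall_roots_smul_eq hmonic

/-- Let `f ∈ ℚ[t][X]` be, regarded as a polynomial in `X` over `ℚ(t)`, monic, irreducible
and separable. Then there is `a ∈ ℚ` such that the specialization `f(a, X) ∈ ℚ[X]` is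
irreducible over `ℚ` and its Galois group over `ℚ` is isomorphic to the Galois group of
`f` over `ℚ(t)`. -/
theorem galoisGroup_specialization (f : Polynomial (Polynomial ℚ))
    (hmonic : (f.map (algebraMap (Polynomial ℚ) (RatFunc ℚ))).Monic)
    (hirr : Irreducible (f.map (algebraMap (Polynomial ℚ) (RatFunc ℚ))))
    (hsep : (f.map (algebraMap (Polynomial ℚ) (RatFunc ℚ))).Separable) :
    ∃ a : ℚ, Irreducible (f.map (Polynomial.evalRingHom a)) ∧
      Nonempty ((f.map (Polynomial.evalRingHom a)).Gal ≃*
        (f.map (algebraMap (Polynomial ℚ) (RatFunc ℚ))).Gal) := by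
  have hf : f.Monic := (IsFractionRing.injective ℚ[X] (RatFunc ℚ)).monic_map_iff.mpr hmonic
  obtain ⟨a, hirr_a, hgal⟩ := galoisGroup_specialization_general hf hsep
  exact ⟨a, hirr_a hirr, hgal⟩
end

section
/- Let G be a finite group. If G occurs as a Galois group over the rational function field ℚ(t), i.e. there exists a finite Galois extension N/ℚ(t) with Gal(N/ℚ(t)) isomorphic to G, then G occurs as a Galois group over ℚ, i.e. there exists a finite Galois extension M/ℚ with Gal(M/ℚ) isomorphic to G. -/
/-!
Let `N / ℚ(t)` be Galois with group `G`, and let `B` be the integral closure of `ℚ[t]` in `N`. For a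
rational number `a` and a prime `P` of `B` above `t - a`, the residue field of `P` has Galois group
`G` over `ℚ` once `P` has full decomposition group and trivial inertia. The second condition
excludes finitely many `a`. The first holds as soon as, for each proper subgroup `H`, the minimal
polynomial of an `H`-fixed element outside `ℚ[t]` has no rational root at `t = a`, so what is needed
is Hilbert's irreducibility theorem in the form: monic separable polynomials over `ℚ[t]` without
roots in `ℚ[t]` have specializations without rational roots.

After a translation, the roots of such a polynomial at `t = 1 / n` lie on finitely many analytic
branches `α (1 / n)`, and the denominator of a rational value is bounded by a fixed power of `n`.
Multiplying by that power, one obtains integer values of a function whose high derivatives are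
nonzero but tend to zero. By Lagrange interpolation and iterated Rolle, a window of integers
contains only boundedly many arguments of such values, unless `α (1 / n)` is a polynomial in
`1 / n`. Such a polynomial, if it takes rational values infinitely often, has rational coefficients
and is a root in `ℚ[t]`.
-/

namespace HilbertIrreducibility

open Filter Polynomial Topology
open scoped ContDiff

section IteratedRolle

variable {f : ℝ → ℝ} {I : Set ℝ} {n : ℕ}

theorem exists_iteratedDeriv_eq_zero (hI : I.OrdConnected) (hIo : IsOpen I)
    (hf : ContDiffOn ℝ n f I) {x : Fin (n + 1) → ℝ} (hx : StrictMono x) (hxI : ∀ i, x i ∈ I)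
    (h0 : ∀ i, f (x i) = 0) : ∃ ξ ∈ I, iteratedDeriv n f ξ = 0 := by
  induction n generalizing f with
  | zero => exact ⟨x 0, hxI 0, by simpa using h0 0⟩
  | succ n ih =>
    have hseg (i : Fin (n + 1)) : Set.Icc (x i.castSucc) (x i.succ) ⊆ I :=
      hI.out (hxI _) (hxI _)
    have rolle (i : Fin (n + 1)) : ∃ y ∈ Set.Ioo (x i.castSucc) (x i.succ), deriv f y = 0 :=
      exists_deriv_eq_zero (hx i.castSucc_lt_succ) (hf.continuousOn.mono (hseg i))
        (by rw [h0, h0])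
    choose y hy hy0 using rolle
    obtain ⟨ξ, hξ, hξ0⟩ := ih (hf.deriv_of_isOpen hIo (by norm_cast))
      (Fin.strictMono_iff_lt_succ.2 fun i => (hy i.castSucc).2.trans (hy i.succ).1)
      (fun i => hseg i (Set.Ioo_subset_Icc_self (hy i))) hy0
    exact ⟨ξ, hξ, by rwa [iteratedDeriv_succ']⟩

theorem iteratedDeriv_eval (p : ℝ[X]) (n : ℕ) (x : ℝ) :
    iteratedDeriv n (fun x => p.eval x) x = (derivative^[n] p).eval x := by
  induction n generalizing p with
  | zero => simp
  | succ n ih =>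
    rw [iteratedDeriv_succ', Function.iterate_succ_apply, ← ih]
    congr 1
    exact funext fun x => p.deriv

theorem exists_iteratedDeriv_eq_factorial_mul_coeff (hI : I.OrdConnected) (hIo : IsOpen I)
    (hf : ContDiffOn ℝ n f I) {T : Finset ℝ} (hT : T.card = n + 1) (hTI : ∀ x ∈ T, x ∈ I)
    {q : ℝ[X]} (hq : q.natDegree ≤ n) (hfq : ∀ x ∈ T, f x = q.eval x) :
    ∃ ξ ∈ I, iteratedDeriv n f ξ = n.factorial * q.coeff n := by
  have hqn : ContDiff ℝ n fun x => q.eval x := by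
    simpa using q.contDiff_aeval (𝕜 := ℝ) n
  obtain ⟨ξ, hξ, h0⟩ := exists_iteratedDeriv_eq_zero hI hIo (hf.sub hqn.contDiffOn)
    (T.orderEmbOfFin hT).strictMono (fun i => hTI _ (T.orderEmbOfFin_mem hT i))
    (fun i => sub_eq_zero.2 (hfq _ (T.orderEmbOfFin_mem hT i)))
  have hder : derivative^[n] q = C (n.factorial * q.coeff n) := by
    have hdeg : (derivative^[n] q).natDegree = 0 := by
      have := natDegree_iterate_derivative q n
      omega
    rw [eq_C_of_natDegree_eq_zero hdeg, coeff_iterate_derivative]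
    simp [Nat.descFactorial_self]
  refine ⟨ξ, hξ, ?_⟩
  rw [← sub_eq_zero, ← h0, iteratedDeriv_fun_sub (hf.contDiffAt (hIo.mem_nhds hξ)) hqn.contDiffAt,
    iteratedDeriv_eval, hder, eval_C]

theorem exists_eqOn_eval_of_iteratedDeriv_eq_zero (hI : I.OrdConnected) (hIo : IsOpen I)
    (hIne : I.Nonempty) (hf : ContDiffOn ℝ (n + 1 : ℕ) f I)
    (h0 : ∀ x ∈ I, iteratedDeriv (n + 1) f x = 0) :
    ∃ p : ℝ[X], p.natDegree ≤ n ∧ ∀ x ∈ I, f x = p.eval x := by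
  classical
  have hinf : I.Infinite := infinite_of_mem_nhds _ (hIo.mem_nhds hIne.some_mem)
  obtain ⟨T, hTI, hT⟩ := hinf.exists_subset_card_eq (n + 1)
  have natDegree_le (S : Finset ℝ) {m : ℕ} (hS : S.card = m + 1) :
      (Lagrange.interpolate S id f).natDegree ≤ m := by
    have := Lagrange.degree_interpolate_lt f (Set.injOn_id (S : Set ℝ))
    rw [hS] at this
    exact natDegree_le_of_degree_le (Order.le_of_lt_succ (by exact_mod_cast this))
  have eval_node (S : Finset ℝ) {x : ℝ} (hx : x ∈ S) :
      (Lagrange.interpolate S id f).eval x = f x :=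
    Lagrange.eval_interpolate_at_node f (Set.injOn_id (S : Set ℝ)) hx
  set p := Lagrange.interpolate T id f
  refine ⟨p, natDegree_le T hT, fun x hx => ?_⟩
  by_cases hxT : x ∈ T
  · exact (eval_node T hxT).symm
  set q := Lagrange.interpolate (insert x T) id f
  have hcard : (insert x T).card = n + 1 + 1 := by rw [Finset.card_insert_of_notMem hxT, hT]
  obtain ⟨ξ, hξ, hcoeff⟩ := exists_iteratedDeriv_eq_factorial_mul_coeff hI hIo hf hcard
    (Finset.forall_mem_insert _ _ _ |>.2 ⟨hx, hTI⟩) (natDegree_le _ hcard)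
    (fun y hy => (eval_node _ hy).symm)
  have hqn : q.coeff (n + 1) = 0 := by
    rw [h0 ξ hξ, eq_comm, mul_eq_zero] at hcoeff
    exact hcoeff.resolve_left (by positivity)
  have hqdeg : q.degree < T.card := by
    rw [hT, degree_lt_iff_coeff_zero]
    intro m hm
    rcases hm.eq_or_lt with rfl | hm
    · exact hqn
    · exact coeff_eq_zero_of_natDegree_lt ((natDegree_le _ hcard).trans_lt hm)
  have hqp : q = p := eq_of_degrees_lt_of_eval_finset_eq T hqdeg
    (Lagrange.degree_interpolate_lt f (Set.injOn_id _))
    fun y hy => (eval_node _ (Finset.mem_insert_of_mem hy)).trans (eval_node _ hy).symm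
  rw [← hqp, eval_node _ (Finset.mem_insert_self x T)]

end IteratedRolle

section Sparse

/-- A set of naturals is *sparse* if, for some bound `m` and every length `L`, all windows of length
`L` that are far enough out contain at most `m` of its members. This notion of smallness is stable
under finite unions, and it is what interpolation on a window of integers produces. -/
def Sparse (B : Set ℕ) : Prop :=
  ∃ m : ℕ, ∀ L : ℕ, ∀ᶠ n in atTop, (B ∩ Set.Ico n (n + L)).ncard ≤ m

variable {B C : Set ℕ}

theorem Sparse.union (hB : Sparse B) (hC : Sparse C) : Sparse (B ∪ C) := by
  obtain ⟨m, hm⟩ := hB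
  obtain ⟨k, hk⟩ := hC
  refine ⟨m + k, fun L => ?_⟩
  filter_upwards [hm L, hk L] with n hn hn'
  rw [Set.union_inter_distrib_right]
  exact (Set.ncard_union_le _ _).trans (add_le_add hn hn')

theorem Sparse.mono (hB : Sparse B) (h : ∀ᶠ n in atTop, n ∈ C → n ∈ B) : Sparse C := by
  obtain ⟨m, hm⟩ := hB
  obtain ⟨A, hA⟩ := eventually_atTop.1 h
  refine ⟨m, fun L => ?_⟩
  filter_upwards [hm L, eventually_ge_atTop A] with n hn hAn
  refine (Set.ncard_le_ncard ?_ ((Set.finite_Ico _ _).inter_of_right _)).trans hn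
  exact fun x hx => ⟨hA x (hAn.trans hx.2.1) hx.1, hx.2⟩

theorem sparse_empty : Sparse ∅ := ⟨0, fun L => by simp⟩

theorem sparse_of_finite (hB : B.Finite) : Sparse B := by
  refine sparse_empty.mono ?_
  rw [← Nat.cofinite_eq_atTop]
  exact hB.eventually_cofinite_notMem.mono fun n hn h => absurd h hn

theorem sparse_biUnion {ι : Type*} (S : Finset ι) {B : ι → Set ℕ} (h : ∀ i ∈ S, Sparse (B i)) :
    Sparse (⋃ i ∈ S, B i) := by
  classical
  induction S using Finset.induction_on with
  | empty => simpa using sparse_empty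
  | insert a S _ ih =>
    rw [Finset.set_biUnion_insert]
    exact (h a (S.mem_insert_self a)).union (ih fun i hi => h i (Finset.mem_insert_of_mem hi))

theorem Sparse.exists_notMem (hB : Sparse B) : ∃ n, n ∉ B := by
  obtain ⟨m, hm⟩ := hB
  obtain ⟨n, hn⟩ := (hm (m + 1)).exists
  by_contra! hall
  rw [Set.eq_univ_of_forall hall, Set.univ_inter, Set.ncard_eq_toFinset_card'] at hn
  simp at hn

end Sparse

section IntegerValues

/-- The denominators in Lagrange's formula are products of differences of nodes. -/
theorem exists_factorial_pow_mul_coeff_interpolate_eq_intCast {K : Type*} [Field K] [CharZero K]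
    {T : Finset ℕ} {L : ℕ} (hTL : ∀ i ∈ T, ∀ j ∈ T, i < j + L) (z : ℕ → ℤ) :
    ∃ w : ℤ, (L.factorial : K) ^ (T.card - 1) * (Lagrange.interpolate T (fun t : ℕ => (t : K))
      fun t => (z t : K)).coeff (T.card - 1) = w := by
  classical
  have hinj : Set.InjOn (fun t : ℕ => (t : K)) T := Nat.cast_injective.injOn
  have hdvd : ∀ i ∈ T, (∏ j ∈ T.erase i, ((i : ℤ) - j)) ∣ (L.factorial : ℤ) ^ (T.card - 1) := by
    intro i hi
    rw [← Finset.card_erase_of_mem hi, ← Finset.prod_const]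
    refine Finset.prod_dvd_prod_of_dvd _ _ fun j hj => ?_
    obtain ⟨hji, hj⟩ := Finset.mem_erase.1 hj
    have := hTL i hi j hj
    have := hTL j hj i hi
    rw [← Int.natAbs_dvd_natAbs, Int.natAbs_natCast]
    exact Nat.dvd_factorial (by omega) (by omega)
  rw [Lagrange.coeff_eq_sum hinj (Lagrange.degree_interpolate_lt _ hinj), Finset.mul_sum]
  have hterm : ∀ i ∈ T, ∃ w : ℤ, (L.factorial : K) ^ (T.card - 1) *
      ((Lagrange.interpolate T (fun t : ℕ => (t : K)) fun t => (z t : K)).eval (i : K) /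
        ∏ j ∈ T.erase i, ((i : K) - j)) = w := by
    intro i hi
    obtain ⟨c, hc⟩ := hdvd i hi
    have hc' : (L.factorial : K) ^ (T.card - 1) = (∏ j ∈ T.erase i, ((i : K) - j)) * c := by
      exact_mod_cast congrArg (Int.cast : ℤ → K) hc
    have hprod : ∏ j ∈ T.erase i, ((i : K) - j) ≠ 0 :=
      Finset.prod_ne_zero_iff.2 fun j hj =>
        sub_ne_zero.2 (Nat.cast_injective.ne (Finset.ne_of_mem_erase hj).symm)
    refine ⟨c * z i, ?_⟩
    rw [hc', Lagrange.eval_interpolate_at_node _ hinj hi]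
    push_cast
    field_simp
  choose! w hw using hterm
  exact ⟨∑ i ∈ T, w i, by rw [Finset.sum_congr rfl hw, Int.cast_sum]⟩

theorem exists_factorial_pow_mul_iteratedDeriv_eq_intCast {f : ℝ → ℝ} {I : Set ℝ} {m L : ℕ}
    (hI : I.OrdConnected) (hIo : IsOpen I) (hf : ContDiffOn ℝ m f I) {T : Finset ℕ}
    (hT : T.card = m + 1) (hTL : ∀ i ∈ T, ∀ j ∈ T, i < j + L) (hTI : ∀ n ∈ T, (n : ℝ) ∈ I)
    (hfT : ∀ n ∈ T, ∃ z : ℤ, f n = z) :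
    ∃ ξ ∈ I, ∃ w : ℤ, (L.factorial : ℝ) ^ m * iteratedDeriv m f ξ = w := by
  choose! z hz using hfT
  have hinj : Set.InjOn (fun t : ℕ => (t : ℝ)) T := Nat.cast_injective.injOn
  obtain ⟨w, hw⟩ := exists_factorial_pow_mul_coeff_interpolate_eq_intCast (K := ℝ) hTL z
  rw [hT, Nat.add_sub_cancel] at hw
  set q := Lagrange.interpolate T (fun t : ℕ => (t : ℝ)) fun t => (z t : ℝ)
  have hq : q.natDegree ≤ m := by
    have := Lagrange.degree_interpolate_lt (fun t => (z t : ℝ)) hinj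
    rw [hT] at this
    exact natDegree_le_of_degree_le (Order.le_of_lt_succ (by exact_mod_cast this))
  obtain ⟨ξ, hξ, hder⟩ := exists_iteratedDeriv_eq_factorial_mul_coeff hI hIo hf
    (T := T.map Nat.castEmbedding) (by rw [Finset.card_map, hT])
    (Finset.forall_mem_map.2 hTI) hq (Finset.forall_mem_map.2 fun n hn =>
      (hz n hn).trans (Lagrange.eval_interpolate_at_node (fun t => (z t : ℝ)) hinj hn).symm)
  refine ⟨ξ, hξ, m.factorial * w, ?_⟩
  rw [hder, Int.cast_mul, ← hw]
  push_cast
  ring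

/-- An integer divided by `L! ^ m` cannot be both nonzero and tiny. -/
theorem sparse_setOf_intCast_of_tendsto_iteratedDeriv {f : ℝ → ℝ} {m : ℕ} {A : ℝ}
    (hf : ContDiffOn ℝ m f (Set.Ioi A)) (hlim : Tendsto (iteratedDeriv m f) atTop (𝓝 0))
    (hne : ∀ᶠ s in atTop, iteratedDeriv m f s ≠ 0) : Sparse {n : ℕ | ∃ z : ℤ, f n = z} := by
  refine ⟨m, fun L => ?_⟩
  have hsmall : ∀ᶠ s in atTop, |(L.factorial : ℝ) ^ m * iteratedDeriv m f s| < 1 := by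
    have := (hlim.const_mul ((L.factorial : ℝ) ^ m)).abs
    rw [mul_zero, abs_zero] at this
    exact this.eventually_lt_const one_pos
  obtain ⟨A', hA'⟩ := eventually_atTop.1 (hne.and hsmall)
  filter_upwards [eventually_gt_atTop ⌈max A A'⌉₊] with n hn
  by_contra! hcard
  obtain ⟨S, hS, hScard⟩ := Set.exists_subset_card_eq (Nat.succ_le_of_lt hcard)
  have hSfin : S.Finite := Set.finite_of_ncard_pos (by omega)
  lift S to Finset ℕ using hSfin
  rw [Set.ncard_coe_finset] at hScard
  obtain ⟨ξ, hξ, w, hw⟩ := exists_factorial_pow_mul_iteratedDeriv_eq_intCast (L := L)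
    Set.ordConnected_Ioi isOpen_Ioi
    (hf.mono (Set.Ioi_subset_Ioi (le_max_left A A'))) hScard
    (fun i hi j hj => (hS hi).2.2.trans_le (Nat.add_le_add_right (hS hj).2.1 L))
    (fun i hi => (Nat.lt_of_ceil_lt hn).trans_le (by exact_mod_cast (hS hi).2.1))
    (fun i hi => (hS hi).1)
  obtain ⟨hξne, hξlt⟩ := hA' ξ ((le_max_right A A').trans hξ.le)
  have hw0 : w = 0 := by
    rw [← Int.abs_lt_one_iff]
    rw [hw] at hξlt
    exact_mod_cast hξlt
  rw [hw0, Int.cast_zero] at hw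
  exact mul_ne_zero (by positivity) hξne hw

end IntegerValues

section AnalyticInInverse

variable {α : ℝ → ℝ}

theorem eventually_atTop_eventually_nhds {p : ℝ → Prop} (h : ∀ᶠ s in atTop, p s) :
    ∀ᶠ s in atTop, ∀ᶠ x in 𝓝 s, p x := by
  obtain ⟨A, hA⟩ := eventually_atTop.1 h
  filter_upwards [eventually_gt_atTop A] with s hs
  filter_upwards [lt_mem_nhds hs] with x hx using hA x hx.le

theorem exists_deriv_zpow_mul_comp_inv (hα : AnalyticAt ℝ α 0) (k : ℤ) :
    ∃ β : ℝ → ℝ, AnalyticAt ℝ β 0 ∧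
      deriv (fun s => s ^ k * α s⁻¹) =ᶠ[atTop] fun s => s ^ (k - 1) * β s⁻¹ := by
  have := hα.deriv
  refine ⟨fun u => k * α u - u * deriv α u, by fun_prop, ?_⟩
  filter_upwards [eventually_gt_atTop 0, tendsto_inv_atTop_zero.eventually hα.eventually_analyticAt]
    with s hs hαs
  have hinv : HasDerivAt (fun s : ℝ => s⁻¹) (-(s ^ 2)⁻¹) s := hasDerivAt_inv hs.ne'
  have hprod : HasDerivAt (fun s => s ^ k * α s⁻¹)
      (k * s ^ (k - 1) * α s⁻¹ + s ^ k * (deriv α s⁻¹ * -(s ^ 2)⁻¹)) s :=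
    (hasDerivAt_zpow k s (.inl hs.ne')).mul (hαs.differentiableAt.hasDerivAt.comp s hinv)
  rw [hprod.deriv, zpow_sub_one₀ hs.ne']
  field_simp
  ring

theorem exists_iteratedDeriv_zpow_mul_comp_inv (hα : AnalyticAt ℝ α 0) (k : ℤ) (m : ℕ) :
    ∃ β : ℝ → ℝ, AnalyticAt ℝ β 0 ∧
      iteratedDeriv m (fun s => s ^ k * α s⁻¹) =ᶠ[atTop] fun s => s ^ (k - m) * β s⁻¹ := by
  induction m with
  | zero => exact ⟨α, hα, by simp [EventuallyEq]⟩
  | succ m ih =>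
    obtain ⟨β, hβ, heq⟩ := ih
    obtain ⟨γ, hγ, hder⟩ := exists_deriv_zpow_mul_comp_inv hβ (k - m)
    refine ⟨γ, hγ, ?_⟩
    filter_upwards [hder, eventually_atTop_eventually_nhds heq] with s hs hloc
    rw [iteratedDeriv_succ, EventuallyEq.deriv_eq hloc, hs, Nat.cast_succ, sub_sub]

theorem exists_contDiffOn_pow_mul_comp_inv (hα : AnalyticAt ℝ α 0) (k : ℕ) :
    ∃ A, ∀ n : ℕ, ContDiffOn ℝ n (fun s => s ^ k * α s⁻¹) (Set.Ioi A) := by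
  obtain ⟨A, hA⟩ := eventually_atTop.1
    ((tendsto_inv_atTop_zero.eventually hα.eventually_analyticAt).and (eventually_gt_atTop 0))
  refine ⟨A, fun n s hs => ContDiffAt.contDiffWithinAt ?_⟩
  obtain ⟨hαs, hs0⟩ := hA s (Set.mem_Ioi.1 hs).le
  exact (contDiffAt_id.pow k).mul (hαs.contDiffAt.comp s (contDiffAt_inv ℝ hs0.ne'))

theorem eval_inv_reflect {K : Type*} [Field K] {p : K[X]} {k : ℕ} (hp : p.natDegree ≤ k) {s : K}
    (hs : s ≠ 0) : (p.reflect k).eval s⁻¹ = p.eval s / s ^ k := by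
  let := invertibleOfNonzero hs
  have := eval₂_reflect_mul_pow (RingHom.id K) s k p hp
  rw [invOf_eq_inv] at this
  exact eq_div_of_mul_eq (pow_ne_zero k hs) this

theorem sparse_intCast_or_exists_eval (hα : AnalyticAt ℝ α 0) (k : ℕ) :
    Sparse {n : ℕ | ∃ z : ℤ, (n : ℝ) ^ k * α (n : ℝ)⁻¹ = z} ∨
      ∃ p : ℝ[X], ∀ᶠ s in atTop, α s⁻¹ = p.eval s⁻¹ := by
  obtain ⟨A, hA⟩ := exists_contDiffOn_pow_mul_comp_inv hα k
  obtain ⟨β, hβ, hder⟩ := exists_iteratedDeriv_zpow_mul_comp_inv hα k (k + 1)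
  simp only [zpow_natCast, Nat.cast_succ, sub_add_cancel_left, zpow_neg_one] at hder
  have hinv : Tendsto (fun s : ℝ => s⁻¹) atTop (𝓝[≠] 0) :=
    tendsto_inv_atTop_nhdsGT_zero.mono_right (nhdsWithin_mono _ fun _ h => (Set.mem_Ioi.1 h).ne')
  rcases hβ.eventually_eq_zero_or_eventually_ne_zero with hβ0 | hβ0
  · right
    obtain ⟨A', hA'⟩ := eventually_atTop.1 (hder.and (tendsto_inv_atTop_zero.eventually hβ0))
    obtain ⟨p, hp, hpeq⟩ := exists_eqOn_eval_of_iteratedDeriv_eq_zero Set.ordConnected_Ioi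
      isOpen_Ioi Set.nonempty_Ioi ((hA (k + 1)).mono (Set.Ioi_subset_Ioi (le_max_left A A')))
      fun s hs => by
        obtain ⟨h1, h2⟩ := hA' s ((le_max_right A A').trans (Set.mem_Ioi.1 hs).le)
        exact h1.trans (mul_eq_zero_of_right _ h2)
    refine ⟨p.reflect k, ?_⟩
    filter_upwards [eventually_gt_atTop (max A A'), eventually_gt_atTop 0] with s hs hs0
    rw [eval_inv_reflect hp hs0.ne', ← hpeq s hs]
    field_simp
  · left
    have hβlim : Tendsto (fun s => β s⁻¹) atTop (𝓝 (β 0)) :=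
      hβ.continuousAt.tendsto.comp tendsto_inv_atTop_zero
    have hlim : Tendsto (fun s => s⁻¹ * β s⁻¹) atTop (𝓝 0) := by
      simpa only [zero_mul] using tendsto_inv_atTop_zero.mul hβlim
    refine sparse_setOf_intCast_of_tendsto_iteratedDeriv (f := fun s => s ^ k * α s⁻¹)
      (hA (k + 1)) (hlim.congr' hder.symm) ?_
    filter_upwards [hder, hinv.eventually hβ0, eventually_gt_atTop 0] with s hs hβs hs0
    rw [hs]
    exact mul_ne_zero (inv_ne_zero hs0.ne') hβs

end AnalyticInInverse

section Branches

variable {𝕜 : Type*} [RCLike 𝕜] {G : 𝕜[X][X]} {a b : 𝕜}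

theorem contDiff_evalEval (G : 𝕜[X][X]) (n : WithTop ℕ∞) :
    ContDiff 𝕜 n fun v : 𝕜 × 𝕜 => G.evalEval v.1 v.2 := by
  induction G using Polynomial.induction_on' with
  | add p q hp hq => simpa only [evalEval_add] using hp.add hq
  | monomial i c =>
    have hc : ContDiff 𝕜 n fun x : 𝕜 => c.eval x := by simpa using c.contDiff_aeval (𝕜 := 𝕜) n
    simpa [evalEval] using (hc.comp contDiff_fst).mul (contDiff_snd.pow i)

theorem hasDerivAt_evalEval (G : 𝕜[X][X]) (a b : 𝕜) :
    HasDerivAt (fun y => G.evalEval a y) ((derivative G).evalEval a b) b := by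
  simp only [← map_evalRingHom_eval, ← derivative_map]
  exact (G.map (evalRingHom a)).hasDerivAt b

theorem exists_analyticAt_branch (h0 : G.evalEval a b = 0)
    (h1 : (derivative G).evalEval a b ≠ 0) :
    ∃ α : 𝕜 → 𝕜, AnalyticAt 𝕜 α a ∧
      ∀ᶠ v in 𝓝 (a, b), G.evalEval v.1 v.2 = 0 ↔ α v.1 = v.2 := by
  set F : 𝕜 × 𝕜 → 𝕜 := fun v => G.evalEval v.1 v.2 with hF
  have hcd : ContDiffAt 𝕜 ω F (a, b) := (contDiff_evalEval G ω).contDiffAt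
  have hpartial : fderiv 𝕜 F (a, b) (0, 1) = (derivative G).evalEval a b := by
    have hslice : HasDerivAt (fun y => (a, y)) ((0 : 𝕜), (1 : 𝕜)) b :=
      (hasDerivAt_const b a).prodMk (hasDerivAt_id b)
    exact ((hcd.differentiableAt (by simp)).hasFDerivAt.comp_hasDerivAt b hslice).unique
      (hasDerivAt_evalEval G a b)
  have hinv : (fderiv 𝕜 F (a, b) ∘L .inr 𝕜 𝕜 𝕜).IsInvertible := by
    refine ⟨ContinuousLinearEquiv.unitsEquivAut 𝕜 (Units.mk0 _ h1), ?_⟩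
    ext
    simp [hpartial]
  refine ⟨hcd.implicitFunction (by simp) hinv,
    (hcd.contDiffAt_implicitFunction (by simp) hinv).analyticAt, ?_⟩
  simpa only [hF, h0] using hcd.eventually_apply_eq_iff_implicitFunction (by simp) hinv

theorem continuous_cauchyBound_map_evalRingHom (hG : G.Monic) :
    Continuous fun t => cauchyBound (G.map (evalRingHom t)) := by
  simp only [cauchyBound, hG.natDegree_map, (hG.map _).leadingCoeff, nnnorm_one, div_one, coeff_map,
    coe_evalRingHom]
  refine Continuous.add (Continuous.finset_sup_apply fun i _ => ?_) continuous_const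
  exact (G.coeff i).continuous.nnnorm

theorem eventually_forall_root_mem (hG : G.Monic) {W : Set 𝕜} (hW : IsOpen W)
    (h : ∀ y, G.evalEval a y = 0 → y ∈ W) :
    ∀ᶠ t in 𝓝 a, ∀ y, G.evalEval t y = 0 → y ∈ W := by
  set R := cauchyBound (G.map (evalRingHom a)) + 1
  have hbound : ∀ᶠ t in 𝓝 a, cauchyBound (G.map (evalRingHom t)) < R :=
    (continuous_cauchyBound_map_evalRingHom hG).continuousAt.eventually_lt_const (lt_add_one _)
  have hK : IsCompact (Metric.closedBall (0 : 𝕜) R \ W) := (isCompact_closedBall _ _).diff hW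
  have htube := hK.eventually_forall_of_forall_eventually (x₀ := a)
    (P := fun t y => G.evalEval t y ≠ 0) fun y hy =>
      (contDiff_evalEval G 0).continuous.continuousAt.eventually_ne fun h0 => hy.2 (h y h0)
  filter_upwards [hbound, htube] with t htR htube y hy
  by_contra hyW
  have hyt : ‖y‖₊ < cauchyBound (G.map (evalRingHom t)) :=
    IsRoot.norm_lt_cauchyBound (hG.map _).ne_zero ((map_evalRingHom_eval t y G).trans hy)
  exact htube y ⟨mem_closedBall_zero_iff.2 (NNReal.coe_le_coe.2 (hyt.trans htR).le), hyW⟩ hy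

end Branches

section Descent

variable {K L : Type*} [Field K] [Field L] [Algebra K L]

theorem exists_map_algebraMap_eq_of_infinite {p : L[X]} {S : Set K} (hS : S.Infinite)
    (h : ∀ x ∈ S, ∃ y : K, p.eval (algebraMap K L x) = algebraMap K L y) :
    ∃ q : K[X], q.map (algebraMap K L) = p := by
  classical
  obtain ⟨T, hTS, hT⟩ := hS.exists_subset_card_eq (p.natDegree + 1)
  choose! y hy using h
  have hinj : Set.InjOn id (T : Set K) := Set.injOn_id _
  refine ⟨Lagrange.interpolate T id y, eq_of_degrees_lt_of_eval_index_eq T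
    (algebraMap K L).injective.injOn ?_ ?_ fun x hx => ?_⟩
  · rw [degree_map]
    exact Lagrange.degree_interpolate_lt _ hinj
  · rw [hT]
    exact degree_le_natDegree.trans_lt (by exact_mod_cast Nat.lt_succ_self _)
  · rw [hy x (hTS hx), eval_map_apply]
    exact congrArg _ (Lagrange.eval_interpolate_at_node y hinj hx)

end Descent

section Denominators

theorem isIntegral_mul_of_eval_eq_zero {R L : Type*} [CommRing R] [CommRing L] [Algebra R L]
    {p : L[X]} (hp : p.Monic) {d y : L} (hd : IsIntegral R d)
    (hcoeff : ∀ i < p.natDegree, IsIntegral R (d * p.coeff i)) (hy : p.eval y = 0) :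
    IsIntegral R (d * y) := by
  by_cases hdeg : p.natDegree = 0
  · rw [hp.natDegree_eq_zero.1 hdeg, eval_one] at hy
    have := subsingleton_of_zero_eq_one hy.symm
    rw [Subsingleton.elim (d * y) 0]
    exact isIntegral_zero
  have hroot : (p.scaleRoots d).eval (d * y) = 0 :=
    scaleRoots_eval₂_eq_zero (RingHom.id L) (s := d) hy
  refine IsIntegral.of_aeval_monic_of_isIntegral_coeff ((monic_scaleRoots_iff d).2 hp)
    (by rwa [natDegree_scaleRoots]) (hroot ▸ isIntegral_zero) fun i => ?_
  rw [coeff_scaleRoots]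
  rcases lt_trichotomy i p.natDegree with hi | rfl | hi
  · obtain ⟨r, hr⟩ := Nat.exists_eq_add_of_lt hi
    rw [hr, show i + r + 1 - i = r + 1 by omega, pow_succ', ← mul_assoc, mul_comm _ d]
    exact (hcoeff i hi).mul (hd.pow r)
  · rw [hp.coeff_natDegree, Nat.sub_self, pow_zero, one_mul]
    exact isIntegral_one
  · rw [coeff_eq_zero_of_natDegree_lt hi, zero_mul]
    exact isIntegral_zero

variable (A : Type*) {K : Type*} [CommRing A] [IsDomain A] [Field K] [Algebra A K]
  [IsFractionRing A K]

theorem exists_isIntegral_mul_eval_inv (S : Finset K[X]) :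
    ∃ D : A, D ≠ 0 ∧ ∃ k : ℕ, ∀ n : A, n ≠ 0 → ∀ q ∈ S,
      IsIntegral A (algebraMap A K (D * n ^ k) * q.eval (algebraMap A K n)⁻¹) := by
  classical
  obtain ⟨D, hD⟩ := IsLocalization.exist_integer_multiples_of_finset (nonZeroDivisors A)
    (S.biUnion fun q => (Finset.range (q.natDegree + 1)).image q.coeff)
  refine ⟨D, nonZeroDivisors.ne_zero D.2, S.sup natDegree, fun n hn q hq => ?_⟩
  rw [eval_eq_sum_range, Finset.mul_sum]
  refine IsIntegral.sum _ fun i hi => ?_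
  obtain ⟨c, hc⟩ := hD (q.coeff i)
    (Finset.mem_biUnion.2 ⟨q, hq, Finset.mem_image_of_mem _ hi⟩)
  have hik : i ≤ S.sup natDegree :=
    (Nat.lt_succ_iff.1 (Finset.mem_range.1 hi)).trans (Finset.le_sup (f := natDegree) hq)
  have hn' : algebraMap A K n ≠ 0 := by simpa using hn
  have hterm : algebraMap A K (D * n ^ S.sup natDegree) *
      (q.coeff i * (algebraMap A K n)⁻¹ ^ i) = algebraMap A K (c * n ^ (S.sup natDegree - i)) := by
    rw [map_mul, map_mul, hc, Algebra.smul_def, map_pow, map_pow, inv_pow, ← pow_mul_pow_sub _ hik]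
    field_simp
  rw [hterm]
  exact isIntegral_algebraMap

theorem exists_isIntegral_mul_of_evalEval_inv_eq_zero {g : K[X][X]} (hg : g.Monic) :
    ∃ D : A, D ≠ 0 ∧ ∃ k : ℕ, ∀ n : A, n ≠ 0 → ∀ y, g.evalEval (algebraMap A K n)⁻¹ y = 0 →
      IsIntegral A (algebraMap A K (D * n ^ k) * y) := by
  classical
  obtain ⟨D, hD, k, h⟩ := exists_isIntegral_mul_eval_inv A
    ((Finset.range g.natDegree).image g.coeff)
  refine ⟨D, hD, k, fun n hn y hy => isIntegral_mul_of_eval_eq_zero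
    (hg.map (evalRingHom (algebraMap A K n)⁻¹)) isIntegral_algebraMap (fun i hi => ?_)
    ((map_evalRingHom_eval _ y g).trans hy)⟩
  rw [hg.natDegree_map] at hi
  rw [coeff_map, coe_evalRingHom]
  exact h n hn _ (Finset.mem_image_of_mem _ (Finset.mem_range.2 hi))

end Denominators

section Specialization

variable {K L : Type*} [Field K] [Field L] [Algebra K L]

theorem exists_eval_eq_zero_of_infinite {g : K[X][X]} {p : L[X]} {S : Set K} (hS : S.Infinite)
    (h : ∀ x ∈ S, ∃ y, p.eval (algebraMap K L x) = algebraMap K L y ∧ g.evalEval x y = 0) :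
    ∃ q : K[X], g.eval q = 0 := by
  obtain ⟨q, rfl⟩ :=
    exists_map_algebraMap_eq_of_infinite hS fun x hx => (h x hx).imp fun _ => And.left
  refine ⟨q, eq_zero_of_infinite_isRoot _ (hS.mono fun x hx => ?_)⟩
  obtain ⟨y, hy, hgy⟩ := h x hx
  rw [eval_map_apply, (algebraMap K L).injective.eq_iff] at hy
  rw [← hy, ← map_evalRingHom_eval] at hgy
  exact (eval_map_apply (f := evalRingHom x) q).symm.trans hgy

theorem evalEval_map_mapRingHom_algebraMap (g : K[X][X]) (x : K) (y : L) :
    (g.map (mapRingHom (algebraMap K L))).evalEval (algebraMap K L x) y =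
      aeval y (g.map (evalRingHom x)) := by
  rw [← map_evalRingHom_eval, Polynomial.map_map, aeval_def, eval₂_map, eval_map]
  congr 1
  ext <;> simp

theorem evalEval_map_compRingHom {R : Type*} [CommSemiring R] (g : R[X][X]) (q : R[X]) (x y : R) :
    (g.map (compRingHom q)).evalEval x y = g.evalEval (q.eval x) y := by
  rw [← map_evalRingHom_eval, ← map_evalRingHom_eval, Polynomial.map_map]
  congr 2
  ext <;> simp

theorem separable_map_iff_resultant_derivative_ne_zero {A : Type*} [CommRing A] {g : A[X]}
    (hg : g.Monic) (φ : A →+* K) :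
    (g.map φ).Separable ↔ φ (resultant g (derivative g)) ≠ 0 := by
  have hdeg : (derivative (g.map φ)).natDegree ≤ (derivative g).natDegree := by
    rw [derivative_map]
    exact natDegree_map_le
  have hres : φ (resultant g (derivative g)) = resultant (g.map φ) (derivative (g.map φ)) := by
    obtain ⟨k, hk⟩ := Nat.exists_eq_add_of_le hdeg
    rw [← resultant_map_map, ← derivative_map, ← hg.natDegree_map φ, hk,
      resultant_add_right_deg _ _ _ _ _ le_rfl, (hg.map φ).coeff_natDegree, one_pow, one_mul]
  rw [hres, Separable, ← isUnit_resultant_iff_isCoprime (hg.map φ), isUnit_iff_ne_zero]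

end Specialization

section RationalRoots

variable {g : ℚ[X][X]}

theorem sparse_setOf_eq_root (hg : g.Monic) (hroot : ∀ q : ℚ[X], g.eval q ≠ 0) {α : ℝ → ℝ}
    (hα : AnalyticAt ℝ α 0) :
    Sparse {n : ℕ | ∃ y : ℚ, α (n : ℝ)⁻¹ = y ∧ g.evalEval (n : ℚ)⁻¹ y = 0} := by
  obtain ⟨D, hD, k, hden⟩ := exists_isIntegral_mul_of_evalEval_inv_eq_zero ℤ hg
  have hD' : (D : ℝ) ≠ 0 := by exact_mod_cast hD
  rcases sparse_intCast_or_exists_eval (α := fun u => D * α u) (by fun_prop) k with hs | ⟨p, hp⟩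
  · refine hs.mono ?_
    filter_upwards [eventually_ne_atTop 0] with n hn ⟨y, hy, hgy⟩
    obtain ⟨z, hz⟩ := IsIntegrallyClosed.isIntegral_iff.1
      (hden n (by exact_mod_cast hn) y (by simpa using hgy))
    refine ⟨z, ?_⟩
    have hz' : ((z : ℚ) : ℝ) = D * n ^ k * y := by exact_mod_cast congrArg (Rat.cast : ℚ → ℝ) hz
    rw [hy, ← Rat.cast_intCast z, hz']
    ring
  · by_contra hns
    have hinf := Nat.frequently_atTop_iff_infinite.1 ((Nat.frequently_atTop_iff_infinite.2
      (mt sparse_of_finite hns)).and_eventually (tendsto_natCast_atTop_atTop.eventually hp))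
    have hinj : Function.Injective fun n : ℕ => (n : ℚ)⁻¹ :=
      inv_injective.comp Nat.cast_injective
    obtain ⟨q, hq⟩ := exists_eval_eq_zero_of_infinite (L := ℝ) (g := g) (p := C (D : ℝ)⁻¹ * p)
      (hinf.image hinj.injOn) (by
        rintro _ ⟨n, ⟨⟨y, hy, hgy⟩, hpn⟩, rfl⟩
        refine ⟨y, ?_, hgy⟩
        simp only [eq_ratCast, Rat.cast_inv, Rat.cast_natCast, eval_mul, eval_C, ← hpn, hy]
        field_simp)
    exact hroot q hq

theorem exists_nhds_sparse_setOf_root (hg : g.Monic) (hroot : ∀ q : ℚ[X], g.eval q ≠ 0)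
    (hsep : (g.map (evalRingHom 0)).Separable) {b : ℝ}
    (hb : aeval b (g.map (evalRingHom 0)) = 0) :
    ∃ V ∈ 𝓝 b, Sparse {n : ℕ | ∃ y : ℚ, (y : ℝ) ∈ V ∧ g.evalEval (n : ℚ)⁻¹ y = 0} := by
  set G := g.map (mapRingHom (algebraMap ℚ ℝ))
  have hderiv : (derivative G).evalEval 0 b ≠ 0 := by
    have := hsep.aeval_derivative_ne_zero hb
    rwa [derivative_map, ← evalEval_map_mapRingHom_algebraMap, ← derivative_map, map_zero] at this
  rw [← evalEval_map_mapRingHom_algebraMap, map_zero] at hb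
  obtain ⟨α, hα, hbranch⟩ := exists_analyticAt_branch hb hderiv
  rw [nhds_prod_eq] at hbranch
  obtain ⟨U, hU, V, hV, hUV⟩ := eventually_prod_iff.1 hbranch
  refine ⟨{y | V y}, hV, (sparse_setOf_eq_root hg hroot hα).mono ?_⟩
  filter_upwards [(tendsto_inv_atTop_zero.comp tendsto_natCast_atTop_atTop).eventually hU]
    with n hn ⟨y, hy, hgy⟩
  refine ⟨y, (hUV hn hy).1 ?_, hgy⟩
  have := map_mapRingHom_evalEval (algebraMap ℚ ℝ) g (n : ℚ)⁻¹ y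
  simpa [hgy] using this

theorem sparse_setOf_exists_root (hg : g.Monic) (hroot : ∀ q : ℚ[X], g.eval q ≠ 0)
    (hsep : (g.map (evalRingHom 0)).Separable) :
    Sparse {n : ℕ | ∃ y, g.evalEval (n : ℚ)⁻¹ y = 0} := by
  set Z := (g.map (evalRingHom 0)).rootSet ℝ
  have hZ : ∀ b : ℝ, b ∈ Z ↔ aeval b (g.map (evalRingHom 0)) = 0 :=
    fun b => by rw [(hg.map _).mem_rootSet]
  have hlocal := fun b hb => exists_nhds_sparse_setOf_root hg hroot hsep ((hZ b).1 hb)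
  choose! V hV hVs using hlocal
  have hfin : Z.Finite := rootSet_finite _ _
  have hnear := eventually_forall_root_mem (a := 0) (hg.map (mapRingHom (algebraMap ℚ ℝ)))
    (isOpen_biUnion fun b (_ : b ∈ Z) => isOpen_interior (s := V b)) fun b hb => by
      have h0 := evalEval_map_mapRingHom_algebraMap g 0 b
      rw [map_zero, hb, eq_comm, ← hZ] at h0
      exact Set.mem_biUnion h0 (mem_interior_iff_mem_nhds.2 (hV b h0))
  refine (sparse_biUnion hfin.toFinset fun b hb => hVs b (hfin.mem_toFinset.1 hb)).mono ?_
  filter_upwards [(tendsto_inv_atTop_zero.comp tendsto_natCast_atTop_atTop).eventually hnear]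
    with n hn ⟨y, hy⟩
  have hroot_real := map_mapRingHom_evalEval (algebraMap ℚ ℝ) g (n : ℚ)⁻¹ y
  have hyV := hn y (by simpa [hy] using hroot_real)
  simp only [Set.mem_iUnion, Set.Finite.mem_toFinset] at hyV ⊢
  obtain ⟨b, hb, hyb⟩ := hyV
  exact ⟨b, hb, y, interior_subset hyb, hy⟩

theorem sparse_setOf_exists_root_add (hg : g.Monic) (hroot : ∀ q : ℚ[X], g.eval q ≠ 0) {a : ℚ}
    (hsep : (g.map (evalRingHom a)).Separable) :
    Sparse {n : ℕ | ∃ y, g.evalEval ((n : ℚ)⁻¹ + a) y = 0} := by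
  have htranslate := sparse_setOf_exists_root (hg.map (compRingHom (X + C a))) (fun q hq => ?_) ?_
  · simpa only [evalEval_map_compRingHom, eval_add, eval_X, eval_C] using htranslate
  · refine hroot (q.comp (X - C a)) ?_
    have hcomp : (compRingHom (X - C a)).comp (compRingHom (X + C a)) = RingHom.id ℚ[X] := by
      ext <;> simp
    have hback := congrArg (compRingHom (X - C a)) hq
    rwa [map_zero, ← eval_map_apply, Polynomial.map_map, hcomp, Polynomial.map_id] at hback
  · rw [Polynomial.map_map]
    convert hsep
    ext <;> simp

theorem exists_forall_evalEval_ne_zero (S : Finset ℚ[X][X]) (hS : ∀ g ∈ S, g.Monic)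
    (hroot : ∀ g ∈ S, ∀ q : ℚ[X], g.eval q ≠ 0)
    (hsep : ∀ g ∈ S, (g.map (algebraMap ℚ[X] (RatFunc ℚ))).Separable) {e : ℚ[X]} (he : e ≠ 0) :
    ∃ t : ℚ, e.eval t ≠ 0 ∧ ∀ g ∈ S, ∀ y, g.evalEval t y ≠ 0 := by
  have hdisc : ∏ g ∈ S, resultant g (derivative g) ≠ 0 :=
    Finset.prod_ne_zero_iff.2 fun g hg h0 =>
      (separable_map_iff_resultant_derivative_ne_zero (hS g hg) _).1 (hsep g hg)
        (by rw [h0, map_zero])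
  obtain ⟨a, ha⟩ : ∃ a : ℚ, (∏ g ∈ S, resultant g (derivative g)).eval a ≠ 0 := by
    by_contra! hzero
    exact hdisc (Polynomial.funext (by simpa using hzero))
  rw [eval_prod, Finset.prod_ne_zero_iff] at ha
  have hsparse := sparse_biUnion S fun g hg => sparse_setOf_exists_root_add (hS g hg) (hroot g hg)
    ((separable_map_iff_resultant_derivative_ne_zero (hS g hg) (evalRingHom a)).2 (ha g hg))
  have hinj : Function.Injective fun n : ℕ => (n : ℚ)⁻¹ + a :=
    (add_left_injective a).comp (inv_injective.comp Nat.cast_injective)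
  have hfin : {n : ℕ | e.eval ((n : ℚ)⁻¹ + a) = 0}.Finite :=
    (finite_setOfPred_isRoot he).preimage hinj.injOn
  obtain ⟨n, hn⟩ := (hsparse.union (sparse_of_finite hfin)).exists_notMem
  simp only [Set.mem_union, Set.mem_iUnion, Set.mem_ofPred_eq, not_or, not_exists] at hn
  exact ⟨(n : ℚ)⁻¹ + a, hn.2, fun g hg y => hn.1 g hg y⟩

end RationalRoots

section GaloisGroups

open scoped Pointwise

universe u

variable {A B : Type*} [CommRing A] [CommRing B] [Algebra A B]

theorem eq_algebraMap_of_eval_minpoly_eq_zero [IsDomain A] [IsDomain B] {c : B}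
    (hc : IsIntegral A c) {a : A} (ha : (minpoly A c).eval a = 0) : c = algebraMap A B a := by
  obtain ⟨q, hq⟩ := dvd_iff_isRoot.2 ha
  have hunit : IsUnit q := ((minpoly.irreducible hc).isUnit_or_isUnit hq).resolve_left
    (not_isUnit_X_sub_C a)
  have hfactor := minpoly.aeval A c
  rw [hq, map_mul] at hfactor
  have hlinear := (mul_eq_zero.1 hfactor).resolve_right (hunit.map (aeval c)).ne_zero
  rwa [map_sub, aeval_X, aeval_C, sub_eq_zero] at hlinear

theorem separable_map_minpoly [IsDomain A] [IsIntegrallyClosed A] [IsDomain B] {c : B}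
    (hc : IsIntegral A c) (K : Type*) [Field K] [CharZero K] [Algebra A K] [IsFractionRing A K] :
    ((minpoly A c).map (algebraMap A K)).Separable :=
  ((minpoly.monic hc).irreducible_iff_irreducible_map_fraction_map.1
    (minpoly.irreducible hc)).separable

theorem eval_mem_of_algebraMap_sub_mem {p : Ideal A} {P : Ideal B} [P.LiesOver p] {g : A[X]}
    {c : B} (hg : aeval c g = 0) {a : A} (hac : algebraMap A B a - c ∈ P) : g.eval a ∈ p := by
  rw [P.mem_of_liesOver p, ← aeval_algebraMap_apply_eq_algebraMap_eval]
  have hdvd := sub_dvd_eval_sub (algebraMap A B a) c (g.map (algebraMap A B))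
  rw [eval_map_algebraMap, eval_map_algebraMap, hg, sub_zero] at hdvd
  exact P.mem_of_dvd hdvd hac

variable {G : Type*} [Group G] [MulSemiringAction G B]

theorem exists_fixed_ne_algebraMap [IsDomain B] [FaithfulSMul A B] [Finite G]
    [hG : IsGaloisGroup G A B] {H : Subgroup G} (hH : H ≠ ⊤) :
    ∃ c : B, (∀ σ ∈ H, σ • c = c) ∧ ∀ a, c ≠ algebraMap A B a := by
  by_contra! hfixed
  have hH_galois : IsGaloisGroup H A B :=
    { faithful := have := hG.faithful; inferInstance
      commutes := inferInstance
      isInvariant := ⟨fun c hc =>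
        (hfixed c fun σ hσ => hc ⟨σ, hσ⟩).imp fun _ => Eq.symm⟩ }
  refine hH (Subgroup.eq_top_of_card_eq H ?_)
  rw [IsGaloisGroup.card_eq_finrank' H A B, IsGaloisGroup.card_eq_finrank' G A B]

section ResidueField

variable [Finite G] [SMulCommClass G A B] [Algebra.IsInvariant A B G]
  {p : Ideal A} {P : Ideal B} [P.LiesOver p]

theorem exists_eval_mem_of_stabilizer_fixed [p.IsMaximal] [P.IsMaximal]
    [Algebra.IsSeparable (A ⧸ p) (B ⧸ P)] {c : B}
    (hc : ∀ σ ∈ MulAction.stabilizer G P, σ • c = c) {g : A[X]} (hg : aeval c g = 0) :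
    ∃ a, g.eval a ∈ p := by
  let := Ideal.Quotient.field p
  let := Ideal.Quotient.field P
  have : Normal (A ⧸ p) (B ⧸ P) := Ideal.Quotient.normal G p P
  have : Module.Finite (A ⧸ p) (B ⧸ P) := Ideal.Quotient.finite_of_isInvariant G p P
  have : IsGalois (A ⧸ p) (B ⧸ P) := ⟨⟩
  have hfixed : ∀ τ : Gal((B ⧸ P)/(A ⧸ p)), τ (Ideal.Quotient.mk P c) = Ideal.Quotient.mk P c := by
    intro τ
    obtain ⟨σ, rfl⟩ := Ideal.Quotient.stabilizerHom_surjective G p P τ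
    exact congrArg (Ideal.Quotient.mk P) (hc σ σ.2)
  obtain ⟨a', ha'⟩ := (IsGalois.mem_range_algebraMap_iff_fixed _).2 hfixed
  obtain ⟨a, rfl⟩ := Ideal.Quotient.mk_surjective a'
  exact ⟨a, eval_mem_of_algebraMap_sub_mem hg (Ideal.Quotient.eq.1 ha')⟩

theorem nonempty_mulEquiv_gal_quotient [P.IsPrime] (hstab : MulAction.stabilizer G P = ⊤)
    (hinertia : P.inertia G = ⊥) : Nonempty (G ≃* Gal((B ⧸ P)/(A ⧸ p))) := by
  have hinj : Function.Injective (Ideal.Quotient.stabilizerHom P p G) := by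
    rw [← MonoidHom.ker_eq_bot_iff, ← Subgroup.map_eq_bot_iff_of_injective _
      (Subgroup.subtype_injective _), Ideal.Quotient.map_ker_stabilizer_subtype, hinertia]
  exact ⟨(Subgroup.topEquiv.symm.trans (MulEquiv.subgroupCongr hstab.symm)).trans
    (MulEquiv.ofBijective _ ⟨hinj, Ideal.Quotient.stabilizerHom_surjective G p P⟩)⟩

end ResidueField

theorem exists_isGalois_of_ringEquiv {F K : Type*} [Field F] [Field K] (E : Type*) [Field E]
    [Algebra F E] [IsGalois F E] {G : Type*} [Group G] [Finite G] (e : G ≃* Gal(E/F))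
    (f : F ≃+* K) :
    ∃ _ : Algebra K E,
      FiniteDimensional K E ∧ IsGalois K E ∧ Nonempty ((E ≃ₐ[K] E) ≃* G) := by
  let : Algebra K E := ((algebraMap F E).comp (f.symm : K →+* F)).toAlgebra
  have : IsGaloisGroup Gal(E/F) K E := .of_ringEquiv Gal(E/F) F K E f fun a =>
    congrArg (algebraMap F E) (f.symm_apply_apply a)
  have : Finite Gal(E/F) := .of_equiv G e.toEquiv
  exact ⟨‹Algebra K E›, IsGaloisGroup.finiteDimensional Gal(E/F) K E,
    IsGaloisGroup.isGalois Gal(E/F) K E,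
    ⟨(IsGaloisGroup.mulEquivAlgEquiv Gal(E/F) K E).symm.trans e.symm⟩⟩

theorem exists_separating_specialization [IsDomain B] [Algebra ℚ[X] B] [FaithfulSMul ℚ[X] B]
    [Finite G] [hG : IsGaloisGroup G ℚ[X] B] :
    ∃ t : ℚ,
      (∀ H : Subgroup G, H ≠ ⊤ → ∃ c : B, (∀ σ ∈ H, σ • c = c) ∧
        ∀ a, ((minpoly ℚ[X] c).eval a).eval t ≠ 0) ∧
      ∀ σ : G, σ ≠ 1 → ∃ b : B, ((minpoly ℚ[X] (σ • b - b)).eval 0).eval t ≠ 0 := by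
  classical
  have hint (c : B) : IsIntegral ℚ[X] c := (Algebra.IsInvariant.isIntegral ℚ[X] B G).isIntegral c
  have hproper (H : Subgroup G) (hH : H ≠ ⊤) := exists_fixed_ne_algebraMap (A := ℚ[X]) (B := B) hH
  have hmoved (σ : G) (hσ : σ ≠ 1) : ∃ b : B, σ • b ≠ b := by
    by_contra! hfixed
    exact hσ (hG.faithful.eq_of_smul_eq_smul fun b : B => by rw [hfixed, one_smul])
  choose! c hcfix hc using hproper
  choose! b hb using hmoved
  cases nonempty_fintype G
  cases nonempty_fintype (Subgroup G)
  let minpolys := (Finset.univ.filter fun H : Subgroup G => H ≠ ⊤).image fun H => minpoly ℚ[X] (c H)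
  let nonzero : ℚ[X] := ∏ σ : G with σ ≠ 1, (minpoly ℚ[X] (σ • b σ - b σ)).eval 0
  have hnonzero : nonzero ≠ 0 := Finset.prod_ne_zero_iff.2 fun σ hσ h0 =>
    hb σ (Finset.mem_filter.1 hσ).2 <| sub_eq_zero.1 <|
      (eq_algebraMap_of_eval_minpoly_eq_zero (hint _) h0).trans (map_zero _)
  obtain ⟨t, ht, hroot⟩ := exists_forall_evalEval_ne_zero minpolys
    (Finset.forall_mem_image.2 fun H _ => minpoly.monic (hint (c H)))
    (Finset.forall_mem_image.2 fun H hH a ha => hc H (Finset.mem_filter.1 hH).2 a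
      (eq_algebraMap_of_eval_minpoly_eq_zero (hint (c H)) ha))
    (Finset.forall_mem_image.2 fun H _ => separable_map_minpoly (hint (c H)) (RatFunc ℚ))
    hnonzero
  rw [eval_prod, Finset.prod_ne_zero_iff] at ht
  refine ⟨t, fun H hH => ⟨c H, hcfix H hH, fun a ha => ?_⟩, fun σ hσ => ⟨b σ, ht σ (by simpa)⟩⟩
  refine hroot _ (Finset.mem_image_of_mem _ (by simpa)) (a.eval t) ?_
  rwa [← map_evalRingHom_eval, ← coe_evalRingHom t, eval_map_apply]

theorem exists_isGalois_rat_of_isGaloisGroup (G : Type*) (B : Type u) [Group G] [Finite G]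
    [CommRing B] [IsDomain B] [Algebra ℚ[X] B] [FaithfulSMul ℚ[X] B] [MulSemiringAction G B]
    [IsGaloisGroup G ℚ[X] B] :
    ∃ (M : Type u) (_ : Field M) (_ : Algebra ℚ M),
      FiniteDimensional ℚ M ∧ IsGalois ℚ M ∧ Nonempty ((M ≃ₐ[ℚ] M) ≃* G) := by
  obtain ⟨t, hproper, hmoved⟩ := exists_separating_specialization (G := G) (B := B)
  have hsurj : Function.Surjective (evalRingHom t) := fun y => ⟨C y, by simp⟩
  let p : Ideal ℚ[X] := RingHom.ker (evalRingHom t)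
  have : p.IsMaximal := RingHom.ker_isMaximal_of_surjective _ hsurj
  have : Algebra.IsIntegral ℚ[X] B := Algebra.IsInvariant.isIntegral ℚ[X] B G
  obtain ⟨P, _, _⟩ := Ideal.exists_maximal_ideal_liesOver_of_isIntegral (S := B) p
  let := Ideal.Quotient.field p
  let := Ideal.Quotient.field P
  let residueEquiv : (ℚ[X] ⧸ p) ≃+* ℚ := RingHom.quotientKerEquivOfSurjective hsurj
  have : CharZero (ℚ[X] ⧸ p) :=
    charZero_of_injective_ringHom (f := (residueEquiv.symm : ℚ →+* _)) residueEquiv.symm.injective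
  have : Normal (ℚ[X] ⧸ p) (B ⧸ P) := Ideal.Quotient.normal G p P
  have : IsGalois (ℚ[X] ⧸ p) (B ⧸ P) := ⟨⟩
  have hstab : MulAction.stabilizer G P = ⊤ := by
    by_contra hne
    obtain ⟨c, hc, hnoroot⟩ := hproper _ hne
    obtain ⟨a, ha⟩ := exists_eval_mem_of_stabilizer_fixed (p := p) hc (minpoly.aeval ℚ[X] c)
    exact hnoroot a ha
  have hinertia : P.inertia G = ⊥ := by
    refine (Subgroup.eq_bot_iff_forall _).2 fun σ hσ => by_contra fun hne => ?_
    obtain ⟨b, hb⟩ := hmoved σ hne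
    refine hb (eval_mem_of_algebraMap_sub_mem (p := p) (P := P) (minpoly.aeval ℚ[X] (σ • b - b)) ?_)
    rw [map_zero, zero_sub]
    exact P.neg_mem_iff.2 (hσ b)
  obtain ⟨e⟩ := nonempty_mulEquiv_gal_quotient (p := p) hstab hinertia
  exact ⟨B ⧸ P, _, exists_isGalois_of_ringEquiv (B ⧸ P) e residueEquiv⟩

theorem exists_isGalois_rat_of_ratFunc (N : Type u) [Field N] [Algebra (RatFunc ℚ) N]
    [FiniteDimensional (RatFunc ℚ) N] [IsGalois (RatFunc ℚ) N] :
    ∃ (M : Type u) (_ : Field M) (_ : Algebra ℚ M),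
      FiniteDimensional ℚ M ∧ IsGalois ℚ M ∧
        Nonempty ((M ≃ₐ[ℚ] M) ≃* (N ≃ₐ[RatFunc ℚ] N)) := by
  let : Algebra ℚ[X] N :=
    ((algebraMap (RatFunc ℚ) N).comp (algebraMap ℚ[X] (RatFunc ℚ))).toAlgebra
  have : IsScalarTower ℚ[X] (RatFunc ℚ) N := IsScalarTower.of_algebraMap_eq fun _ => rfl
  let B := integralClosure ℚ[X] N
  let := IsIntegralClosure.MulSemiringAction ℚ[X] (RatFunc ℚ) N B
  have : IsFractionRing B N :=
    IsIntegralClosure.isFractionRing_of_finite_extension ℚ[X] (RatFunc ℚ) N B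
  have : FaithfulSMul ℚ[X] N := .trans ℚ[X] (RatFunc ℚ) N
  have : FaithfulSMul ℚ[X] B := .tower_bot ℚ[X] B N
  have := IsGaloisGroup.of_isFractionRing Gal(N/RatFunc ℚ) ℚ[X] B (RatFunc ℚ) N
  exact exists_isGalois_rat_of_isGaloisGroup Gal(N/RatFunc ℚ) B

end GaloisGroups

end HilbertIrreducibility

/-- If a finite group `G` occurs as a Galois group over the rational function field
`ℚ(t)`, then it occurs as a Galois group over `ℚ`. -/
theorem occurs_over_ratFunc_rat_implies_occurs_over_rat (G : Type) [Group G] [Finite G]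
    (h : ∃ (N : Type) (_ : Field N) (_ : Algebra (RatFunc ℚ) N),
      FiniteDimensional (RatFunc ℚ) N ∧ IsGalois (RatFunc ℚ) N ∧
        Nonempty ((N ≃ₐ[RatFunc ℚ] N) ≃* G)) :
    ∃ (M : Type) (_ : Field M) (_ : Algebra ℚ M),
      FiniteDimensional ℚ M ∧ IsGalois ℚ M ∧
        Nonempty ((M ≃ₐ[ℚ] M) ≃* G) := by
  obtain ⟨N, _, _, _, _, ⟨e⟩⟩ := h
  obtain ⟨M, hField, hAlg, hfin, hgal, ⟨e'⟩⟩ :=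
    HilbertIrreducibility.exists_isGalois_rat_of_ratFunc N
  exact ⟨M, hField, hAlg, hfin, hgal, ⟨e'.trans e⟩⟩
end

section
/- Let n ≥ 1, let M = ℚ(x₁, …, xₙ) be the field of rational functions in n indeterminates over ℚ, and let G be a subgroup of the symmetric group Sₙ acting on M by permuting the indeterminates. If the fixed field K = M^G is rational over ℚ (i.e. K is isomorphic as a field extension of ℚ to a field of rational functions ℚ(w₁, …, w_m) in finitely many indeterminates), then G occurs as a Galois group over ℚ; that is, there exists a finite Galois extension L/ℚ with Gal(L/ℚ) isomorphic to G. -/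
/-!
Let `R = ℤ[w₁, …, w_m]`, let `S` be its integral closure in `M` and let `γ ∈ G` act on the
variables through `σ`. For every large prime `p` some point `ξ` over a finite field of
characteristic `p` satisfies `ξᵢ ^ p = ξ_{σ(i)}` and avoids a given hypersurface: these points span
the whole space, and a polynomial of degree less than `p` cannot vanish on all their
`𝔽_p`-combinations. Evaluation at `ξ` turns the action of `γ` into the `p`-th power map, so its
kernel on `S` is an unramified prime with Frobenius `γ` whose residue field over `R` is `𝔽_p`.

Choosing distinct primes `p` for the different `γ`, the Chinese remainder theorem provides a single
`t ∈ ℤ^m` that reduces to all the resulting `𝔽_p`-points of `Spec R`. Let `Q` be a prime of `S`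
above the point `w = t`. The decomposition group of `Q` meets every conjugacy class of `G`, hence
it is `G` by Jordan's theorem, and the inertia group is trivial because it is contained in that of
an unramified prime. So the fraction field of `S ⧸ Q` is Galois over `ℚ` with group `G`.
-/

section LinearForms

open MvPolynomial

theorem totalDegree_aeval_le {R σ τ : Type*} [CommSemiring R] {g : σ → MvPolynomial τ R}
    (hg : ∀ i, (g i).totalDegree ≤ 1) (h : MvPolynomial σ R) :
    (aeval g h).totalDegree ≤ h.totalDegree := by
  rw [aeval_def, eval₂_eq]
  refine totalDegree_finsetSum_le fun d hd ↦ ?_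
  calc (C (coeff d h) * ∏ i ∈ d.support, g i ^ d i).totalDegree
      ≤ (∏ i ∈ d.support, g i ^ d i).totalDegree := by
        simpa only [totalDegree_C, zero_add] using totalDegree_mul (C (coeff d h)) _
    _ ≤ ∑ i ∈ d.support, (g i ^ d i).totalDegree := totalDegree_finsetProd _ _
    _ ≤ ∑ i ∈ d.support, d i := Finset.sum_le_sum fun i _ ↦ (totalDegree_pow _ _).trans
        (by simpa only [mul_one] using Nat.mul_le_mul_left (d i) (hg i))
    _ ≤ h.totalDegree := le_totalDegree hd

theorem exists_eval_ne_zero_of_mem_finset {R σ : Type*} [CommRing R] [IsDomain R] [Finite σ]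
    {h : MvPolynomial σ R} (h0 : h ≠ 0) {s : Finset R} (hs : h.totalDegree < s.card) :
    ∃ x : σ → R, (∀ i, x i ∈ s) ∧ eval x h ≠ 0 := by
  contrapose! h0
  exact eq_zero_of_eval_zero_at_prod_finset h (fun _ ↦ s)
    (fun i ↦ (degreeOf_le_totalDegree h i).trans_lt hs) h0

theorem exists_sum_smul_eval_ne_zero {F σ τ : Type*} [Field F] [Fintype τ] [Finite σ]
    {f : τ → σ → F} (hf : Submodule.span F (Set.range f) = ⊤) {h : MvPolynomial σ F}
    (h0 : h ≠ 0) {s : Finset F} (hs : h.totalDegree < s.card) :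
    ∃ c : τ → F, (∀ j, c j ∈ s) ∧ eval (∑ j, c j • f j) h ≠ 0 := by
  let g : σ → MvPolynomial τ F := fun i ↦ ∑ j, f j i • X j
  have eval_g (c : τ → F) : eval c (aeval g h) = eval (∑ j, c j • f j) h := by
    rw [← aeval_eq_eval, ← aeval_eq_eval, ← AlgHom.comp_apply, comp_aeval]
    congr 2
    ext i
    simp [g, mul_comm]
  obtain ⟨x, -, hx⟩ := exists_eval_ne_zero_of_mem_finset h0 hs
  obtain ⟨c, rfl⟩ := (Submodule.mem_span_range_iff_exists_fun F).mp
    (hf ▸ Submodule.mem_top : x ∈ _)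
  have hg : (aeval g h).totalDegree ≤ h.totalDegree := totalDegree_aeval_le (fun i ↦
    totalDegree_finsetSum_le fun j _ ↦ (totalDegree_smul_le _ _).trans (totalDegree_X j).le) h
  simp only [← eval_g] at hx ⊢
  exact exists_eval_ne_zero_of_mem_finset (fun h ↦ hx (by rw [h, map_zero])) (hg.trans_lt hs)

end LinearForms

section TwistedVectors

open Finset

variable {ι F : Type*} [Field F] {p N : ℕ} {σ : Equiv.Perm ι}

theorem eq_zero_of_sum_pow_mul_eq_zero [Fintype F] (hp : 1 < p) (hF : Fintype.card F = p ^ N)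
    {a : ℕ → F}
    (ha : ∀ α : F, ∑ j ∈ range N, α ^ p ^ j * a j = 0) {k : ℕ} (hk : k < N) : a k = 0 := by
  let P : Polynomial F := ∑ j ∈ range N, Polynomial.monomial (p ^ j) (a j)
  have natDegree_P : P.natDegree < Fintype.card F := by
    rw [hF]
    refine (Polynomial.natDegree_sum_le_of_forall_le (n := p ^ (N - 1)) _ _ fun j hj ↦ ?_).trans_lt
      (Nat.pow_lt_pow_right hp (by lia))
    have := mem_range.mp hj
    exact (Polynomial.natDegree_monomial_le _).trans (Nat.pow_le_pow_right (by lia) (by lia))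
  have P_eq_zero : P = 0 :=
    P.eq_zero_of_natDegree_lt_card_of_eval_eq_zero Function.injective_id (fun α ↦ by
      simpa [P, Polynomial.eval_finsetSum, mul_comm] using ha α) natDegree_P
  simpa [P, Polynomial.finsetSum_coeff, Polynomial.coeff_monomial, Nat.pow_right_inj hp, hk]
    using congrArg (Polynomial.coeff · (p ^ k)) P_eq_zero

/-- The vectors on which raising every coordinate to the power `p` acts as the permutation `σ` of
the coordinates: in characteristic `p`, the points at which the Frobenius of `p` is `σ`. -/
def twistedVectors (F : Type*) [Field F] (p : ℕ) (σ : Equiv.Perm ι) : Set (ι → F) :=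
  {v | ∀ i, v i ^ p = v (σ i)}

theorem sum_pow_smul_single_mem_twistedVectors [DecidableEq ι] [Fact p.Prime] [CharP F p]
    (hσ : σ ^ N = 1) {α : F} (hα : α ^ p ^ N = α) (i : ι) :
    ∑ j ∈ range N, α ^ p ^ j • (Pi.single ((σ ^ j) i) 1 : ι → F) ∈ twistedVectors F p σ := by
  intro k
  let u (j : ℕ) : ι → F := α ^ p ^ j • Pi.single ((σ ^ j) i) 1
  have u_pow (j : ℕ) : u j k ^ p = u (j + 1) (σ k) := by
    have hp : p ≠ 0 := (Fact.out : p.Prime).ne_zero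
    simp [u, Pi.single_apply, pow_succ' σ, pow_succ p, pow_mul, hp]
  have u_zero : u N = u 0 := by simp [u, hσ, hα]
  calc (∑ j ∈ range N, u j) k ^ p = ∑ j ∈ range N, u (j + 1) (σ k) := by
        simp only [Finset.sum_apply, sum_pow_char, u_pow]
    _ = (∑ j ∈ range N, u j) (σ k) := by
        rw [Finset.sum_apply, ← add_left_inj (u 0 (σ k)), ← sum_range_succ' (u · (σ k)),
          sum_range_succ, u_zero]

theorem sum_smul_mem_twistedVectors {τ : Type*} [Fintype τ] [Fact p.Prime] [CharP F p] {c : τ → F}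
    (hc : ∀ j, c j ^ p = c j) {f : τ → ι → F} (hf : ∀ j, f j ∈ twistedVectors F p σ) :
    ∑ j, c j • f j ∈ twistedVectors F p σ := by
  intro i
  simp only [Finset.sum_apply, Pi.smul_apply, smul_eq_mul, sum_pow_char, mul_pow, hc, hf _ i]

theorem span_twistedVectors_eq_top [Finite ι] [Fintype F] [Fact p.Prime] [CharP F p]
    (hF : Fintype.card F = p ^ N) (hN : N ≠ 0) (hσ : σ ^ N = 1) :
    Submodule.span F (twistedVectors F p σ) = ⊤ := by
  classical
  by_contra hne
  obtain ⟨f, f_ne_zero, hf⟩ := Submodule.exists_le_ker_of_lt_top _ (lt_top_iff_ne_top.mpr hne)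
  refine f_ne_zero (LinearMap.pi_ext' fun i ↦ LinearMap.ext_ring ?_)
  have sum_eq_zero (α : F) : ∑ j ∈ range N, α ^ p ^ j * f (Pi.single ((σ ^ j) i) 1) = 0 := by
    have hα : α ^ p ^ N = α := by rw [← hF, FiniteField.pow_card]
    have := hf (Submodule.subset_span (sum_pow_smul_single_mem_twistedVectors hσ hα i))
    simpa using this
  simpa using eq_zero_of_sum_pow_mul_eq_zero (Fact.out : p.Prime).one_lt hF sum_eq_zero
    (Nat.pos_of_ne_zero hN)

end TwistedVectors

section TwistedPoints

open MvPolynomial Filter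

theorem map_intCast_ne_zero {σ : Type*} (F : Type*) [CommRing F] {p : ℕ} [CharP F p]
    {h : MvPolynomial σ ℤ} {d : σ →₀ ℕ} (h0 : coeff d h ≠ 0) (hp : (coeff d h).natAbs < p) :
    map (Int.castRingHom F) h ≠ 0 := by
  refine ne_zero_iff.mpr ⟨d, ?_⟩
  rw [coeff_map, eq_intCast, Ne, CharP.intCast_eq_zero_iff F p]
  exact fun hdvd ↦ hp.not_ge (Nat.le_of_dvd (Int.natAbs_pos.mpr h0) (Int.natCast_dvd.mp hdvd))

theorem eventually_exists_mem_twistedVectors {ι : Type*} [Finite ι] {h : MvPolynomial ι ℤ}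
    (h0 : h ≠ 0) (σ : Equiv.Perm ι) : ∀ᶠ p in atTop, p.Prime → ∃ (F : Type) (_ : Field F),
      Finite F ∧ CharP F p ∧ ∃ ξ ∈ twistedVectors F p σ, aeval ξ h ≠ 0 := by
  obtain ⟨d, hd⟩ := ne_zero_iff.mp h0
  filter_upwards [eventually_gt_atTop h.totalDegree, eventually_gt_atTop (coeff d h).natAbs]
    with p hdeg hcoeff hp
  have := Fact.mk hp
  let F := GaloisField p (orderOf σ)
  have := Fintype.ofFinite F
  have := Fintype.ofFinite (twistedVectors F p σ)
  have hN : orderOf σ ≠ 0 := (orderOf_pos σ).ne'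
  have card_F : Fintype.card F = p ^ orderOf σ := by
    rw [← Nat.card_eq_fintype_card, GaloisField.card p _ hN]
  have span_eq_top := span_twistedVectors_eq_top card_F hN (pow_orderOf_eq_one σ)
  let s : Finset F := Finset.univ.map ⟨ZMod.castHom dvd_rfl F, RingHom.injective _⟩
  have card_s : s.card = p := by simp [s, ZMod.card]
  obtain ⟨c, hc, hne⟩ := exists_sum_smul_eval_ne_zero
    ((congrArg _ Subtype.range_coe).trans span_eq_top) (map_intCast_ne_zero F hd hcoeff)
    (((Finset.sup_mono (support_map_subset _ _)).trans_lt hdeg).trans_eq card_s.symm)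
  have c_pow (v) : c v ^ p = c v := by
    obtain ⟨z, -, hz⟩ := Finset.mem_map.mp (hc v)
    rw [← hz, Function.Embedding.coeFn_mk, ← map_pow, ZMod.pow_card]
  exact ⟨F, inferInstance, inferInstance, inferInstance, ∑ v, c v • v.1,
    sum_smul_mem_twistedVectors c_pow Subtype.property, by rwa [eval_map] at hne⟩

end TwistedPoints

section Jordan

theorem subgroup_eq_top_of_forall_isConj {G : Type*} [Group G] [Finite G] {H : Subgroup G}
    (hH : ∀ g : G, ∃ h ∈ H, IsConj g h) : H = ⊤ := by
  -- Every element fixes a coset of `H`, and by Burnside the average number of fixed cosets is one;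
  -- so the identity fixes only one coset.
  classical
  have := Fintype.ofFinite G
  have (g : G) := Fintype.ofFinite (MulAction.fixedBy (G ⧸ H) g)
  have := Fintype.ofFinite (Quotient (MulAction.orbitRel G (G ⧸ H)))
  have card_fixedBy_pos (g : G) : 1 ≤ Fintype.card (MulAction.fixedBy (G ⧸ H) g) := by
    obtain ⟨h, hh, hgh⟩ := hH g
    obtain ⟨c, rfl⟩ := isConj_iff.mp hgh
    refine Fintype.card_pos_iff.mpr ⟨(c⁻¹ : G), ?_⟩
    rw [MulAction.mem_fixedBy, MulAction.Quotient.smul_coe, eq_comm, QuotientGroup.eq]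
    simpa [mul_assoc] using hh
  have sum_card_fixedBy_le : ∑ g : G, Fintype.card (MulAction.fixedBy (G ⧸ H) g) ≤ ∑ _g : G, 1 := by
    have card_orbits_le : Fintype.card (Quotient (MulAction.orbitRel G (G ⧸ H))) ≤ 1 :=
      Fintype.card_le_one_iff_subsingleton.mpr
        ((MulAction.pretransitive_iff_subsingleton_quotient G (G ⧸ H)).mp inferInstance)
    rw [MulAction.sum_card_fixedBy_eq_card_orbits_mul_card_group, Fintype.card_eq_sum_ones (α := G)]
    exact (Nat.mul_le_mul_right _ card_orbits_le).trans_eq (one_mul _)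
  have card_fixedBy_one : Fintype.card (MulAction.fixedBy (G ⧸ H) (1 : G)) ≤ 1 :=
    ((Finset.sum_eq_sum_iff_of_le fun g _ ↦ card_fixedBy_pos g).mp
      ((Finset.sum_le_sum fun g _ ↦ card_fixedBy_pos g).antisymm sum_card_fixedBy_le) 1
      (Finset.mem_univ 1)).ge
  refine (Subgroup.eq_top_iff' H).mpr fun x ↦ ?_
  have := Fintype.card_le_one_iff.mp card_fixedBy_one
    ⟨((1 : G) : G ⧸ H), by simp⟩ ⟨(x : G ⧸ H), by simp⟩
  simpa [QuotientGroup.eq] using congrArg Subtype.val this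

end Jordan

section UnramifiedFrobenius

open Pointwise

variable {A B G : Type*} [CommRing A] [CommRing B] [Algebra A B] [Group G]
  [MulSemiringAction G B] [SMulCommClass G A B]

/-- `g` is the arithmetic Frobenius of the prime ideal `I` of `B` over the invariant ring `A`, the
residue field of `I` is finite and its inertia group is trivial. Then `g` is the only Frobenius
element at `I`. -/
structure IsUnramifiedFrobAt (A : Type*) {B G : Type*} [CommRing A] [CommRing B] [Algebra A B]
    [Group G] [MulSemiringAction G B] [SMulCommClass G A B] (g : G) (I : Ideal B) : Prop where
  isPrime : I.IsPrime
  finite_quotient : Finite (B ⧸ I)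
  isArithFrobAt : IsArithFrobAt A g I
  inertia_eq_bot : I.inertia G = ⊥

namespace IsUnramifiedFrobAt

variable {g : G} {I : Ideal B}

theorem conj (h : IsUnramifiedFrobAt A g I) (c : G) :
    IsUnramifiedFrobAt A (c * g * c⁻¹) (c • I) where
  isPrime := have := h.isPrime; inferInstance
  finite_quotient := have := h.finite_quotient
    .of_equiv _ (Ideal.quotientEquiv I (c • I) (MulSemiringAction.toRingEquiv G B c) rfl).toEquiv
  isArithFrobAt := h.isArithFrobAt.conj c
  inertia_eq_bot := by
    refine (Subgroup.eq_bot_iff_forall _).mpr fun τ hτ ↦ ?_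
    have : c⁻¹ * τ * c ∈ I.inertia G := fun x ↦ by
      simpa [Ideal.mem_pointwise_smul_iff_inv_smul_mem, smul_sub, mul_smul] using hτ (c • x)
    rw [h.inertia_eq_bot, Subgroup.mem_bot] at this
    simpa [mul_assoc, inv_mul_eq_iff_eq_mul] using this

theorem eq_of_isArithFrobAt (h : IsUnramifiedFrobAt A g I) {g' : G} (hg' : IsArithFrobAt A g' I) :
    g' = g := by
  simpa [h.inertia_eq_bot, mul_inv_eq_one] using hg'.mul_inv_mem_inertia h.isArithFrobAt

theorem exists_le_smul [Finite G] [Algebra.IsInvariant A B G] (h : IsUnramifiedFrobAt A g I)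
    {Q : Ideal B} (hQ : Q.under A ≤ I.under A) : ∃ c : G, Q ≤ c • I := by
  have := h.isPrime
  have := Algebra.IsInvariant.isIntegral A B G
  obtain ⟨I', hle, _, hI'⟩ := Ideal.exists_ideal_over_prime_of_isIntegral (I.under A) Q hQ
  obtain ⟨c, rfl⟩ := Algebra.IsInvariant.exists_smul_of_under_eq A B G I I' hI'.symm
  exact ⟨c, hle⟩

theorem inertia_eq_bot_of_under_le [Finite G] [Algebra.IsInvariant A B G]
    (h : IsUnramifiedFrobAt A g I) {Q : Ideal B} (hQ : Q.under A ≤ I.under A) :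
    Q.inertia G = ⊥ := by
  obtain ⟨c, hc⟩ := h.exists_le_smul hQ
  exact eq_bot_iff.mpr fun τ hτ ↦ (h.conj c).inertia_eq_bot.le fun x ↦ hc (hτ x)

end IsUnramifiedFrobAt

end UnramifiedFrobenius

section Decomposition

open Pointwise

variable {A B : Type*} [CommRing A] [CommRing B] [Algebra A B] (G : Type*) [Group G] [Finite G]
  [MulSemiringAction G B] [SMulCommClass G A B] [Algebra.IsInvariant A B G]
  (P : Ideal A) (Q : Ideal B) [Q.IsPrime] [Q.LiesOver P]

section ResidueField

variable (K L : Type*) [Field K] [Field L] [Algebra (A ⧸ P) K] [Algebra (B ⧸ Q) L]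
  [Algebra (A ⧸ P) L] [IsScalarTower (A ⧸ P) (B ⧸ Q) L] [Algebra K L]
  [IsScalarTower (A ⧸ P) K L] [IsFractionRing (A ⧸ P) K] [IsFractionRing (B ⧸ Q) L]

omit [SMulCommClass G A B] in
include G P Q in
theorem isGalois_residueField [PerfectField K] : IsGalois K L := by
  have : P.IsPrime := Ideal.over_def Q P ▸ Ideal.IsPrime.under A Q
  have := Ideal.IsFractionRing.normal G P Q K L
  exact { }

include G P Q in
theorem finiteDimensional_residueField [IsGalois K L] : FiniteDimensional K L :=
  have : P.IsPrime := Ideal.over_def Q P ▸ Ideal.IsPrime.under A Q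
  Ideal.IsFractionRing.finite_of_isInvariant G P Q K L

include G K L in
theorem isInvariant_quotient [IsGalois K L] [IsIntegrallyClosed (A ⧸ P)] :
    Algebra.IsInvariant (A ⧸ P) (B ⧸ Q) Gal((B ⧸ Q)/(A ⧸ P)) := by
  have : P.IsPrime := Ideal.over_def Q P ▸ Ideal.IsPrime.under A Q
  have := finiteDimensional_residueField G P Q K L
  have := Algebra.IsInvariant.isIntegral A B G
  refine ⟨fun b hb ↦ ?_⟩
  obtain ⟨k, hk⟩ : algebraMap (B ⧸ Q) L b ∈ Set.range (algebraMap K L) := by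
    refine (IsGalois.mem_range_algebraMap_iff_fixed _).mpr fun f ↦ ?_
    obtain ⟨g, rfl⟩ := IsFractionRing.stabilizerHom_surjective G P Q K L f
    exact (IsFractionRing.fieldEquivOfAlgEquiv_algebraMap K L L _ b).trans (congrArg _ (hb _))
  have k_integral : IsIntegral (A ⧸ P) k := by
    rw [← isIntegral_algebraMap_iff (algebraMap K L).injective, hk]
    exact (Algebra.IsIntegral.isIntegral b).algebraMap
  obtain ⟨a, rfl⟩ := IsIntegrallyClosed.algebraMap_eq_of_integral k_integral
  refine ⟨a, IsFractionRing.injective (B ⧸ Q) L ?_⟩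
  rw [← hk, ← IsScalarTower.algebraMap_apply, ← IsScalarTower.algebraMap_apply]

end ResidueField

theorem card_quotient_comap {R S : Type*} [CommRing R] [CommRing S] {f : R →+* S}
    (hf : Function.Surjective f) (I : Ideal S) :
    Nat.card (R ⧸ I.comap f) = Nat.card (S ⧸ I) :=
  Nat.card_congr (.ofBijective (Ideal.quotientMap I f le_rfl)
    ⟨Ideal.quotientMap_injective, Ideal.quotientMap_surjective hf⟩)

theorem exists_isArithFrobAt_comap_mk [Algebra.IsInvariant (A ⧸ P) (B ⧸ Q) Gal((B ⧸ Q)/(A ⧸ P))]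
    (I : Ideal (B ⧸ Q)) [I.IsPrime] [Finite ((B ⧸ Q) ⧸ I)] :
    ∃ g ∈ MulAction.stabilizer G Q, IsArithFrobAt A g (I.comap (Ideal.Quotient.mk Q)) := by
  have : Finite Gal((B ⧸ Q)/(A ⧸ P)) :=
    .of_surjective _ (Ideal.Quotient.stabilizerHom_surjective G P Q)
  obtain ⟨f, hf⟩ := IsArithFrobAt.exists_of_isInvariant (A ⧸ P) Gal((B ⧸ Q)/(A ⧸ P)) I
  obtain ⟨g, rfl⟩ := Ideal.Quotient.stabilizerHom_surjective G P Q f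
  refine ⟨g, g.2, fun x ↦ ?_⟩
  have under_comap : (I.comap (Ideal.Quotient.mk Q)).under A =
      (I.under (A ⧸ P)).comap (Ideal.Quotient.mk P) := rfl
  rw [under_comap, card_quotient_comap Ideal.Quotient.mk_surjective, Ideal.mem_comap, map_sub,
    map_pow]
  exact hf (Ideal.Quotient.mk Q x)

variable {G P Q}

namespace IsUnramifiedFrobAt

variable {g : G} {I : Ideal B}

theorem mem_stabilizer_of_le [Algebra.IsInvariant (A ⧸ P) (B ⧸ Q) Gal((B ⧸ Q)/(A ⧸ P))]
    (h : IsUnramifiedFrobAt A g I) (hle : Q ≤ I) : g ∈ MulAction.stabilizer G Q := by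
  have := h.isPrime
  have := h.finite_quotient
  have comap_map : (I.map (Ideal.Quotient.mk Q)).comap (Ideal.Quotient.mk Q) = I := by
    rw [Ideal.comap_map_mk hle]
  have : (I.map (Ideal.Quotient.mk Q)).IsPrime := Ideal.isPrime_map_quotientMk_of_isPrime hle
  have : Finite ((B ⧸ Q) ⧸ I.map (Ideal.Quotient.mk Q)) :=
    .of_equiv _ (DoubleQuot.quotQuotEquivQuotOfLE hle).symm.toEquiv
  obtain ⟨δ, hδ, hδI⟩ := exists_isArithFrobAt_comap_mk G P Q (I.map (Ideal.Quotient.mk Q))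
  rw [comap_map] at hδI
  rwa [← h.eq_of_isArithFrobAt hδI]

end IsUnramifiedFrobAt

theorem stabilizer_eq_top [Algebra.IsInvariant (A ⧸ P) (B ⧸ Q) Gal((B ⧸ Q)/(A ⧸ P))]
    (hG : ∀ g : G, ∃ I : Ideal B, IsUnramifiedFrobAt A g I ∧ Q.under A ≤ I.under A) :
    MulAction.stabilizer G Q = ⊤ := by
  refine subgroup_eq_top_of_forall_isConj fun g ↦ ?_
  obtain ⟨I, hI, hle⟩ := hG g
  obtain ⟨c, hc⟩ := hI.exists_le_smul hle
  exact ⟨_, (hI.conj c).mem_stabilizer_of_le (P := P) hc, isConj_iff.mpr ⟨c, rfl⟩⟩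

theorem nonempty_galois_mulEquiv (K L : Type*) [Field K] [Field L] [Algebra (A ⧸ P) K]
    [Algebra (B ⧸ Q) L] [Algebra (A ⧸ P) L] [IsScalarTower (A ⧸ P) (B ⧸ Q) L] [Algebra K L]
    [IsScalarTower (A ⧸ P) K L] [IsFractionRing (A ⧸ P) K] [IsFractionRing (B ⧸ Q) L]
    [IsGalois K L] [IsIntegrallyClosed (A ⧸ P)]
    (hG : ∀ g : G, ∃ I : Ideal B, IsUnramifiedFrobAt A g I ∧ P ≤ I.under A) :
    Nonempty (Gal(L/K) ≃* G) := by
  have := isInvariant_quotient G P Q K L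
  rw [Ideal.over_def Q P] at hG
  have bijective : Function.Bijective (IsFractionRing.stabilizerHom G P Q K L) := by
    refine ⟨?_, IsFractionRing.stabilizerHom_surjective G P Q K L⟩
    obtain ⟨I, hI, hle⟩ := hG 1
    rw [← MonoidHom.ker_eq_bot_iff, IsFractionRing.ker_stabilizerHom, eq_bot_iff]
    exact fun τ hτ ↦ Subtype.ext
      ((hI.inertia_eq_bot_of_under_le hle).le (Ideal.coe_mem_inertia.mpr hτ))
  exact ⟨(MulEquiv.ofBijective _ bijective).symm.trans
    ((MulEquiv.subgroupCongr (stabilizer_eq_top (P := P) hG)).trans Subgroup.topEquiv)⟩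

end Decomposition

section ChineseRemainder

open MvPolynomial Filter

theorem ker_eval_le {κ : Type*} {I : Ideal (MvPolynomial κ ℤ)} {t : κ → ℤ}
    (ht : ∀ k, Ideal.Quotient.mk I (X k) = (t k : MvPolynomial κ ℤ ⧸ I)) :
    RingHom.ker (eval t) ≤ I := by
  have mk_eq : Ideal.Quotient.mk I = (Int.castRingHom _).comp (eval t) :=
    ringHom_ext (fun z ↦ by simp) fun k ↦ by simp [ht]
  intro r hr
  rw [← Ideal.Quotient.eq_zero_iff_mem, mk_eq, RingHom.comp_apply, hr, map_zero]

theorem exists_ker_eval_le {ι κ : Type*} [Finite ι] (I : ι → Ideal (MvPolynomial κ ℤ))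
    (prime_card : ∀ i, (Nat.card (MvPolynomial κ ℤ ⧸ I i)).Prime)
    (injective_card : Function.Injective fun i ↦ Nat.card (MvPolynomial κ ℤ ⧸ I i)) :
    ∃ t : κ → ℤ, ∀ i, RingHom.ker (eval t) ≤ I i := by
  have := Fintype.ofFinite ι
  let p (i : ι) : ℕ := Nat.card (MvPolynomial κ ℤ ⧸ I i)
  have (i : ι) := Nat.finite_of_card_ne_zero (prime_card i).ne_zero
  have (i : ι) := Fintype.ofFinite (MvPolynomial κ ℤ ⧸ I i)
  let e (i : ι) : ZMod (p i) ≃+* MvPolynomial κ ℤ ⧸ I i :=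
    ZMod.ringEquivOfPrime _ (prime_card i) Nat.card_eq_fintype_card.symm
  have coprime : Set.Pairwise (Finset.univ : Finset ι) (Function.onFun Nat.Coprime p) :=
    fun i _ j _ hij ↦ (Nat.coprime_primes (prime_card i) (prime_card j)).mpr (injective_card.ne hij)
  let t (k : κ) := Nat.chineseRemainderOfFinset
    (fun i ↦ ((e i).symm (Ideal.Quotient.mk _ (X k))).val) p Finset.univ
    (fun i _ ↦ (prime_card i).ne_zero) coprime
  refine ⟨fun k ↦ (t k).1, fun i ↦ ker_eval_le fun k ↦ ?_⟩
  have : NeZero (p i) := ⟨(prime_card i).ne_zero⟩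
  have := (ZMod.natCast_eq_natCast_iff _ _ _).mpr ((t k).2 i (Finset.mem_univ i))
  rw [ZMod.natCast_zmod_val, RingEquiv.eq_symm_apply, map_natCast] at this
  rw [← this, Int.cast_natCast]

theorem exists_injective_prime {ι : Type*} [Finite ι] {C : ι → ℕ → Prop}
    (hC : ∀ i, ∀ᶠ p in atTop, p.Prime → C i p) :
    ∃ p : ι → ℕ, p.Injective ∧ ∀ i, (p i).Prime ∧ C i (p i) := by
  have infinite : {p : ℕ | p.Prime ∧ ∀ i, p.Prime → C i p}.Infinite :=
    Nat.frequently_atTop_iff_infinite.mp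
      ((Nat.frequently_atTop_iff_infinite.mpr Nat.infinite_setOfPred_prime).and_eventually
        (eventually_all.mpr hC))
  obtain ⟨f, hf⟩ := exists_injective_nat ι
  let e := infinite.natEmbedding
  exact ⟨fun i ↦ e (f i), Subtype.val_injective.comp (e.injective.comp hf),
    fun i ↦ ⟨(e (f i)).2.1, (e (f i)).2.2 i (e (f i)).2.1⟩⟩

end ChineseRemainder

section Specialization

universe u

open Filter

theorem exists_isGalois_rat_of_isUnramifiedFrobAt {A G : Type*} {B : Type u} [CommRing A]
    [CommRing B] [Algebra A B] [FaithfulSMul A B] [Group G] [Finite G] [MulSemiringAction G B]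
    [SMulCommClass G A B] [Algebra.IsInvariant A B G] (f : A →+* ℤ)
    (hG : ∀ g : G, ∃ I : Ideal B, IsUnramifiedFrobAt A g I ∧ RingHom.ker f ≤ I.under A) :
    ∃ (L : Type u) (_ : Field L) (_ : Algebra ℚ L),
      FiniteDimensional ℚ L ∧ IsGalois ℚ L ∧ Nonempty (Gal(L/ℚ) ≃* G) := by
  have := Algebra.IsInvariant.isIntegral A B G
  let P := RingHom.ker f
  have : P.IsPrime := RingHom.ker_isPrime f
  obtain ⟨⟨Q, _, _⟩⟩ := (inferInstance : Nonempty (P.primesOver B))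
  let L := FractionRing (B ⧸ Q)
  let e : A ⧸ P ≃+* ℤ := RingHom.quotientKerEquivOfSurjective fun z ↦ ⟨z, by simp⟩
  let _ : Algebra (A ⧸ P) ℚ := ((Int.castRingHom ℚ).comp (e : A ⧸ P →+* ℤ)).toAlgebra
  have : IsFractionRing (A ⧸ P) ℚ := IsFractionRing.of_ringEquiv_left e fun _ ↦ rfl
  have : IsIntegrallyClosed (A ⧸ P) := .of_equiv e.symm
  have injective : Function.Injective (algebraMap (A ⧸ P) L) :=
    FaithfulSMul.algebraMap_injective _ _
  let _ : Algebra ℚ L := (IsFractionRing.lift injective).toAlgebra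
  have : IsScalarTower (A ⧸ P) ℚ L :=
    .of_algebraMap_eq fun x ↦ (IsFractionRing.lift_algebraMap injective x).symm
  have := isGalois_residueField G P Q ℚ L
  exact ⟨L, inferInstance, inferInstance, finiteDimensional_residueField G P Q ℚ L, this,
    nonempty_galois_mulEquiv (P := P) (Q := Q) ℚ L hG⟩

theorem exists_isGalois_rat_of_eventually {κ G : Type*} {B : Type u} [CommRing B]
    [Algebra (MvPolynomial κ ℤ) B] [FaithfulSMul (MvPolynomial κ ℤ) B] [Group G] [Finite G]
    [MulSemiringAction G B] [IsGaloisGroup G (MvPolynomial κ ℤ) B]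
    (hG : ∀ g : G, ∀ᶠ p in atTop, p.Prime → ∃ I : Ideal B,
      IsUnramifiedFrobAt (MvPolynomial κ ℤ) g I ∧
        Nat.card (MvPolynomial κ ℤ ⧸ I.under (MvPolynomial κ ℤ)) = p) :
    ∃ (L : Type u) (_ : Field L) (_ : Algebra ℚ L),
      FiniteDimensional ℚ L ∧ IsGalois ℚ L ∧ Nonempty (Gal(L/ℚ) ≃* G) := by
  obtain ⟨p, hp, h⟩ := exists_injective_prime hG
  choose prime I hI card using h
  obtain ⟨t, ht⟩ := exists_ker_eval_le (fun g ↦ (I g).under (MvPolynomial κ ℤ))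
    (fun g ↦ (card g).symm ▸ prime g) (by simpa only [card] using hp)
  exact exists_isGalois_rat_of_isUnramifiedFrobAt (MvPolynomial.eval t) fun g ↦ ⟨I g, hI g, ht g⟩

end Specialization

section FrobeniusKernel

variable {A B G F : Type*} [CommRing A] [CommRing B] [Algebra A B] [Group G]
  [MulSemiringAction G B] [SMulCommClass G A B] [Field F] {p : ℕ} [Fact p.Prime] [CharP F p]

theorem card_quotient_ker_of_pow_eq (f : A →+* F) (hf : ∀ a, f a ^ p = f a) :
    Nat.card (A ⧸ RingHom.ker f) = p := by
  have range_eq : f.range = (⊥ : Subfield F).toSubring := by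
    ext x
    refine ⟨?_, fun hx ↦ ?_⟩
    · rintro ⟨a, rfl⟩
      exact (Subfield.mem_bot_iff_pow_eq_self F p).mpr (hf a)
    · obtain ⟨z, rfl⟩ := (mem_bot_iff_intCast p F).mp hx
      exact ⟨z, map_intCast f z⟩
  rw [Nat.card_congr (RingHom.quotientKerEquivRange f).toEquiv, range_eq]
  exact Subfield.card_bot F p

variable {ψ : B →+* F} {g : G} (hψ : ∀ b, ψ (g • b) = ψ b ^ p)

include hψ

theorem card_quotient_under_ker : Nat.card (A ⧸ (RingHom.ker ψ).under A) = p :=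
  card_quotient_ker_of_pow_eq (ψ.comp (algebraMap A B)) fun a ↦ by
    rw [RingHom.comp_apply, ← hψ, smul_algebraMap]

theorem isUnramifiedFrobAt_ker [Finite F] (hG : ∀ τ : G, τ ≠ 1 → ∃ b, ψ (τ • b - b) ≠ 0) :
    IsUnramifiedFrobAt A g (RingHom.ker ψ) where
  isPrime := RingHom.ker_isPrime ψ
  finite_quotient := .of_injective _ (RingHom.kerLift_injective ψ)
  isArithFrobAt b := by
    rw [card_quotient_under_ker hψ, RingHom.mem_ker, map_sub, map_pow]
    exact sub_eq_zero.mpr (hψ b)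
  inertia_eq_bot := by
    refine (Subgroup.eq_bot_iff_forall _).mpr fun τ hτ ↦ ?_
    by_contra hne
    obtain ⟨b, hb⟩ := hG τ hne
    exact hb (hτ b)

end FrobeniusKernel

section RegularFunctions

variable {A M F : Type*} [CommRing A] [IsDomain A] [Field M] [Algebra A M] [IsFractionRing A M]
  [Field F] (f : A →+* F)

attribute [local instance] RingHom.ker_isPrime

variable (M) in
/-- The ring of elements of the function field `M` that are regular at the point `f` of `Spec A`:
the localization of `A` at `ker f`, inside `M`. -/
noncomputable def regularAt : Subalgebra A M :=
  Localization.subalgebra.ofField M (RingHom.ker f).primeCompl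
    (Ideal.primeCompl_le_nonZeroDivisors _)

namespace regularAt

instance : IsLocalization (RingHom.ker f).primeCompl (regularAt M f) :=
  Localization.subalgebra.isLocalization_ofField M _ _

variable {f} in
theorem mem_iff {x : M} : x ∈ regularAt M f ↔
    ∃ a b : A, f b ≠ 0 ∧ x * algebraMap A M b = algebraMap A M a := by
  have map_ne_zero {b : A} (hb : f b ≠ 0) : algebraMap A M b ≠ 0 :=
    (FaithfulSMul.algebraMap_eq_zero_iff A M).not.mpr (ne_zero_of_map hb)
  constructor
  · rintro ⟨a, b, hb, rfl⟩
    exact ⟨a, b, hb, inv_mul_cancel_right₀ (map_ne_zero hb) _⟩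
  · rintro ⟨a, b, hb, h⟩
    exact ⟨a, b, hb, (eq_mul_inv_iff_mul_eq₀ (map_ne_zero hb)).mpr h⟩

/-- The value of a regular function at the point `f`. -/
noncomputable def eval : regularAt M f →+* F :=
  IsLocalization.lift (M := (RingHom.ker f).primeCompl) fun b ↦ isUnit_iff_ne_zero.mpr b.2

variable {f}

theorem eval_mul_eq {x : regularAt M f} {a b : A}
    (h : (x : M) * algebraMap A M b = algebraMap A M a) : eval f x * f b = f a := by
  have : x * algebraMap A _ b = algebraMap A _ a := Subtype.ext h
  simpa [eval] using congrArg (eval f) this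

theorem eval_ne_zero {x : regularAt M f} (hx : (x : M) ≠ 0) (hinv : (x : M)⁻¹ ∈ regularAt M f) :
    eval f x ≠ 0 := by
  have : x * ⟨_, hinv⟩ = 1 := Subtype.ext (mul_inv_cancel₀ hx)
  exact left_ne_zero_of_mul_eq_one (by rw [← map_mul, this, map_one])

theorem eval_smul {Γ : Type*} [Group Γ] [MulSemiringAction Γ M] {γ : Γ} {α : A →+* A}
    (hα : ∀ a, γ • algebraMap A M a = algebraMap A M (α a)) {p : ℕ}
    (hf : ∀ a, f (α a) = f a ^ p) {x y : regularAt M f} (hxy : γ • (x : M) = y) :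
    eval f y = eval f x ^ p := by
  obtain ⟨a, b, hb, hx⟩ := mem_iff.mp x.2
  have hy : (y : M) * algebraMap A M (α b) = algebraMap A M (α a) := by
    rw [← hα, ← hα, ← hx, smul_mul', hxy]
  refine mul_right_cancel₀ (pow_ne_zero p hb) ?_
  rw [← mul_pow, eval_mul_eq hx, ← hf, ← hf, eval_mul_eq hy]

theorem mem_of_isInteger_smul {b : A} (hb : f b ≠ 0) {x : M}
    (hx : IsLocalization.IsInteger A (b • x)) : x ∈ regularAt M f := by
  obtain ⟨a, ha⟩ := hx
  exact mem_iff.mpr ⟨a, b, hb, by rw [ha, Algebra.smul_def, mul_comm]⟩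

variable {R : Type*} [CommRing R] [Algebra R M]

theorem algebraMap_mem {s : Set R} (hs : Algebra.adjoin ℤ s = ⊤)
    (h : ∀ r ∈ s, algebraMap R M r ∈ regularAt M f) (r : R) :
    algebraMap R M r ∈ regularAt M f := by
  have closure_le : Subring.closure s ≤ (regularAt M f).toSubring.comap (algebraMap R M) :=
    Subring.closure_le.mpr h
  have hr : r ∈ Algebra.adjoin ℤ s := hs ▸ Algebra.mem_top
  rw [Algebra.adjoin_int] at hr
  exact closure_le hr

theorem mem_of_isIntegral [IsIntegrallyClosed A] (hR : ∀ r : R, algebraMap R M r ∈ regularAt M f)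
    {x : M} (hx : IsIntegral R x) : x ∈ regularAt M f := by
  have : IsIntegrallyClosed (regularAt M f) :=
    isIntegrallyClosed_of_isLocalization _ _ (RingHom.ker f).primeCompl_le_nonZeroDivisors
  let g : R →+* regularAt M f := (algebraMap R M).codRestrict _ hR
  have : IsIntegral (regularAt M f) x := hx.map_of_comp_eq g (RingHom.id M) rfl
  obtain ⟨y, rfl⟩ := IsIntegrallyClosed.isIntegral_iff.mp this
  exact y.2

/-- The value at the point `f` of the functions integral over `R`, when all of `R` is regular at
`f`. -/
noncomputable def integralClosureEval [IsIntegrallyClosed A]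
    (hR : ∀ r : R, algebraMap R M r ∈ regularAt M f) : integralClosure R M →+* F :=
  (eval f).comp ((integralClosure R M).val.toRingHom.codRestrict (regularAt M f)
    fun s ↦ mem_of_isIntegral hR s.2)

end regularAt

end RegularFunctions

section GoodPoints

variable (A R : Type*) {M Γ : Type*} [CommRing A] [IsDomain A] [Field M] [Algebra A M]
  [IsFractionRing A M] [CommRing R] [Algebra R M] [Group Γ] [MulSemiringAction Γ M]
  [SMulCommClass Γ R M]

theorem exists_ne_zero_forall_mem_regularAt [Algebra.FiniteType ℤ R] [Finite Γ]
    [FaithfulSMul Γ (integralClosure R M)] :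
    ∃ h : A, h ≠ 0 ∧ ∀ {F : Type*} [Field F] (f : A →+* F), f h ≠ 0 →
      (∀ r : R, algebraMap R M r ∈ regularAt M f) ∧
      ∀ τ : Γ, τ ≠ 1 → ∃ x : integralClosure R M, τ • (x : M) - x ≠ 0 ∧
        (τ • (x : M) - x)⁻¹ ∈ regularAt M f := by
  obtain ⟨s, hs⟩ := Algebra.FiniteType.out (R := ℤ) (A := R)
  have exists_moved (τ : {τ : Γ // τ ≠ 1}) :
      ∃ x : integralClosure R M, τ.1 • (x : M) - x ≠ 0 := by
    by_contra! fixed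
    refine τ.2 (eq_of_smul_eq_smul fun x : integralClosure R M ↦ ?_)
    rw [one_smul]
    exact Subtype.ext (sub_eq_zero.mp (fixed x))
  choose x hx using exists_moved
  obtain ⟨h, hh⟩ := IsLocalization.exist_integer_multiples_of_finite (nonZeroDivisors A)
    (Sum.elim (fun r : s ↦ algebraMap R M r)
      fun τ ↦ (τ.1 • (x τ : M) - x τ)⁻¹)
  refine ⟨h, nonZeroDivisors.coe_ne_zero h, fun f hf ↦ ⟨?_, fun τ hτ ↦ ?_⟩⟩
  · exact regularAt.algebraMap_mem hs fun r hr ↦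
      regularAt.mem_of_isInteger_smul hf (hh (.inl ⟨r, hr⟩))
  · exact ⟨x ⟨τ, hτ⟩, hx ⟨τ, hτ⟩, regularAt.mem_of_isInteger_smul hf (hh (.inr ⟨τ, hτ⟩))⟩

theorem exists_ne_zero_forall_exists_isUnramifiedFrobAt [IsIntegrallyClosed A]
    [Algebra.FiniteType ℤ R] [Finite Γ] [FaithfulSMul Γ (integralClosure R M)] :
    ∃ h : A, h ≠ 0 ∧ ∀ {F : Type*} [Field F] [Finite F] {p : ℕ} [Fact p.Prime] [CharP F p]
      {f : A →+* F} {γ : Γ} {α : A →+* A}, f h ≠ 0 →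
      (∀ a, γ • algebraMap A M a = algebraMap A M (α a)) → (∀ a, f (α a) = f a ^ p) →
      ∃ I : Ideal (integralClosure R M), IsUnramifiedFrobAt R γ I ∧
        Nat.card (R ⧸ I.under R) = p := by
  obtain ⟨h, h0, hh⟩ := exists_ne_zero_forall_mem_regularAt A R (M := M) (Γ := Γ)
  refine ⟨h, h0, fun {F _ _ p _ _ f γ α} hf hα hfα ↦ ?_⟩
  obtain ⟨hR, hΓ⟩ := hh f hf
  let ψ := regularAt.integralClosureEval hR
  have hψ (s : integralClosure R M) : ψ (γ • s) = ψ s ^ p := regularAt.eval_smul hα hfα rfl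
  refine ⟨RingHom.ker ψ, isUnramifiedFrobAt_ker hψ fun τ hτ ↦ ?_, card_quotient_under_ker hψ⟩
  obtain ⟨x, hx, hinv⟩ := hΓ τ hτ
  exact ⟨x, regularAt.eval_ne_zero hx hinv⟩

end GoodPoints

section PermutationAction

open MvPolynomial Filter

variable {ι : Type*}

theorem smul_algebraMap_eq_rename {M Γ : Type*} [CommRing M] [Algebra (MvPolynomial ι ℤ) M]
    [Group Γ] [MulSemiringAction Γ M] {γ : Γ} {σ : ι → ι}
    (hγ : ∀ i, γ • algebraMap (MvPolynomial ι ℤ) M (X i) =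
      algebraMap (MvPolynomial ι ℤ) M (X (σ i))) (a : MvPolynomial ι ℤ) :
    γ • algebraMap (MvPolynomial ι ℤ) M a = algebraMap (MvPolynomial ι ℤ) M (rename σ a) := by
  have : (MulSemiringAction.toRingHom Γ M γ).comp (algebraMap (MvPolynomial ι ℤ) M) =
      (algebraMap (MvPolynomial ι ℤ) M).comp (rename σ).toRingHom :=
    ringHom_ext (by simp) (by simpa using hγ)
  exact DFunLike.congr_fun this a

theorem aeval_rename_eq_pow {F : Type*} [Field F] {p : ℕ} [Fact p.Prime] [CharP F p]
    {σ : Equiv.Perm ι} {ξ : ι → F} (hξ : ξ ∈ twistedVectors F p σ) (a : MvPolynomial ι ℤ) :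
    aeval ξ (rename σ a) = aeval ξ a ^ p := by
  have : (aeval ξ : MvPolynomial ι ℤ →ₐ[ℤ] F).toRingHom.comp (rename σ).toRingHom =
      (frobenius F p).comp (aeval ξ : MvPolynomial ι ℤ →ₐ[ℤ] F).toRingHom :=
    ringHom_ext (by simp) (by simpa [frobenius_def] using fun i ↦ (hξ i).symm)
  exact DFunLike.congr_fun this a

variable {M Γ : Type*} [Field M] [Algebra (MvPolynomial ι ℤ) M]
  [IsFractionRing (MvPolynomial ι ℤ) M] [Finite ι]
  [Group Γ] [Finite Γ] [MulSemiringAction Γ M]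

theorem eventually_exists_isUnramifiedFrobAt (R : Type*) [CommRing R] [Algebra R M]
    [Algebra.FiniteType ℤ R] [SMulCommClass Γ R M] [FaithfulSMul Γ (integralClosure R M)]
    {γ : Γ} {σ : Equiv.Perm ι} (hγ : ∀ i, γ • algebraMap (MvPolynomial ι ℤ) M (X i) =
      algebraMap (MvPolynomial ι ℤ) M (X (σ i))) :
    ∀ᶠ p in atTop, p.Prime → ∃ I : Ideal (integralClosure R M),
      IsUnramifiedFrobAt R γ I ∧ Nat.card (R ⧸ I.under R) = p := by
  obtain ⟨h, h0, hh⟩ :=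
    exists_ne_zero_forall_exists_isUnramifiedFrobAt (MvPolynomial ι ℤ) R (M := M) (Γ := Γ)
  filter_upwards [eventually_exists_mem_twistedVectors h0 σ] with p hp prime
  obtain ⟨F, _, _, _, ξ, hξ, hξh⟩ := hp prime
  have := Fact.mk prime
  exact hh (f := (aeval ξ : MvPolynomial ι ℤ →ₐ[ℤ] F).toRingHom) (α := (rename σ).toRingHom) hξh
    (smul_algebraMap_eq_rename hγ) (aeval_rename_eq_pow hξ)

end PermutationAction

section FixedField

open MvPolynomial

universe u

theorem exists_isGalois_rat_of_isGaloisGroup {ι κ Γ : Type*} [Finite ι] [Finite κ] [Group Γ]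
    [Finite Γ] {M : Type u} (K : Type*) [Field K] [Field M] [Algebra K M] [MulSemiringAction Γ M]
    [IsGaloisGroup Γ K M] [Algebra (MvPolynomial ι ℤ) M] [IsFractionRing (MvPolynomial ι ℤ) M]
    [Algebra (MvPolynomial κ ℤ) K] [IsFractionRing (MvPolynomial κ ℤ) K]
    (hΓ : ∀ γ : Γ, ∃ σ : Equiv.Perm ι, ∀ i, γ • algebraMap (MvPolynomial ι ℤ) M (X i) =
      algebraMap (MvPolynomial ι ℤ) M (X (σ i))) :
    ∃ (L : Type u) (_ : Field L) (_ : Algebra ℚ L),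
      FiniteDimensional ℚ L ∧ IsGalois ℚ L ∧ Nonempty (Gal(L/ℚ) ≃* Γ) := by
  let R := MvPolynomial κ ℤ
  let _ : Algebra R M := ((algebraMap K M).comp (algebraMap R K)).toAlgebra
  have : IsScalarTower R K M := .of_algebraMap_eq fun _ ↦ rfl
  have : FaithfulSMul R M := (faithfulSMul_iff_algebraMap_injective R M).mpr
    ((algebraMap K M).injective.comp (IsFractionRing.injective R K))
  have : FiniteDimensional K M := IsGaloisGroup.finiteDimensional Γ K M
  have : SMulCommClass Γ R M := ⟨fun γ r x ↦ by
    rw [← algebraMap_smul K r x, smul_comm, algebraMap_smul]⟩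
  have := integralClosure.isFractionRing_of_finite_extension (A := R) K M
  have := IsGaloisGroup.of_isFractionRing Γ R (integralClosure R M) K M
  -- Instance search on `R` would find the `ℤ`-algebra structure of `MvPolynomial`, which does not
  -- unify with the one on an arbitrary ring.
  have : @Algebra.FiniteType ℤ R _ _ (Ring.toIntAlgebra R) :=
    inferInstanceAs (Algebra.FiniteType ℤ (MvPolynomial κ ℤ))
  have := IsGaloisGroup.faithful R (G := Γ) (B := integralClosure R M)
  refine exists_isGalois_rat_of_eventually (κ := κ) (B := integralClosure R M) fun γ ↦ ?_
  obtain ⟨σ, hσ⟩ := hΓ γ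
  exact eventually_exists_isUnramifiedFrobAt R hσ

end FixedField

section IntegralPolynomials

open MvPolynomial

attribute [local instance] algebraMvPolynomial

theorem isFractionRing_mvPolynomial {σ R : Type*} (K T : Type*) [CommRing R]
    [Field K] [Algebra R K] [IsFractionRing R K] [Field T] [Algebra (MvPolynomial σ K) T]
    [IsFractionRing (MvPolynomial σ K) T] [Algebra (MvPolynomial σ R) T]
    [IsScalarTower (MvPolynomial σ R) (MvPolynomial σ K) T] :
    IsFractionRing (MvPolynomial σ R) T := by
  have hinj : Function.Injective (algebraMap (MvPolynomial σ R) (MvPolynomial σ K)) :=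
    map_injective _ (IsFractionRing.injective R K)
  have : IsLocalization ((nonZeroDivisors (MvPolynomial σ K)).comap
      (algebraMap (MvPolynomial σ R) (MvPolynomial σ K))) T :=
    IsLocalization.localization_localization_isLocalization_of_has_all_units
      ((nonZeroDivisors R).map C) (nonZeroDivisors (MvPolynomial σ K)) T
      fun _ ↦ IsUnit.mem_nonZeroDivisors
  rwa [le_antisymm (comap_nonZeroDivisors_le_of_injective hinj)
    (nonZeroDivisors_le_comap_nonZeroDivisors_of_injective _ hinj)] at this

universe u

theorem exists_isGalois_rat_of_isFractionRing_rat {ι κ Γ : Type*} [Finite ι] [Finite κ] [Group Γ]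
    [Finite Γ] {M : Type u} (K : Type*) [Field K] [Field M] [Algebra K M] [MulSemiringAction Γ M]
    [IsGaloisGroup Γ K M] [Algebra (MvPolynomial ι ℚ) M] [IsFractionRing (MvPolynomial ι ℚ) M]
    [Algebra (MvPolynomial κ ℚ) K] [IsFractionRing (MvPolynomial κ ℚ) K]
    (hΓ : ∀ γ : Γ, ∃ σ : Equiv.Perm ι, ∀ i, γ • algebraMap (MvPolynomial ι ℚ) M (X i) =
      algebraMap (MvPolynomial ι ℚ) M (X (σ i))) :
    ∃ (L : Type u) (_ : Field L) (_ : Algebra ℚ L),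
      FiniteDimensional ℚ L ∧ IsGalois ℚ L ∧ Nonempty (Gal(L/ℚ) ≃* Γ) := by
  let _ : Algebra (MvPolynomial ι ℤ) M := .compHom M (algebraMap _ (MvPolynomial ι ℚ))
  let _ : Algebra (MvPolynomial κ ℤ) K := .compHom K (algebraMap _ (MvPolynomial κ ℚ))
  have : IsScalarTower (MvPolynomial ι ℤ) (MvPolynomial ι ℚ) M := .of_algebraMap_eq fun _ ↦ rfl
  have : IsScalarTower (MvPolynomial κ ℤ) (MvPolynomial κ ℚ) K := .of_algebraMap_eq fun _ ↦ rfl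
  have := isFractionRing_mvPolynomial (σ := ι) (R := ℤ) ℚ M
  have := isFractionRing_mvPolynomial (σ := κ) (R := ℤ) ℚ K
  refine exists_isGalois_rat_of_isGaloisGroup (ι := ι) (κ := κ) (M := M) K ?_
  have algebraMap_X (i : ι) : algebraMap (MvPolynomial ι ℤ) M (X i) =
      algebraMap (MvPolynomial ι ℚ) M (X i) := by
    rw [IsScalarTower.algebraMap_apply _ (MvPolynomial ι ℚ), algebraMap_def, map_X]
  simpa only [algebraMap_X] using hΓ

end IntegralPolynomials

theorem isGaloisGroup_fixedField {F E : Type*} [Field F] [Field E] [Algebra F E]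
    (H : Subgroup Gal(E/F)) : IsGaloisGroup H (IntermediateField.fixedField H) E where
  faithful := inferInstance
  commutes := ⟨fun σ k x ↦ (smul_mul' σ (k : E) x).trans (congrArg (· * _) (k.2 σ))⟩
  isInvariant := ⟨fun x h ↦ ⟨⟨x, h⟩, rfl⟩⟩

/-- **Noether's problem implies realizability.** Let `M = ℚ(x₁, …, xₙ)` be the field of
rational functions in `n` indeterminates over `ℚ`, and let `G ≤ Sₙ` act on `M` by
permuting the indeterminates (encoded by a homomorphism `φ` from `G` to the group of
`ℚ`-automorphisms of `M` sending each variable `xᵢ` to `x_{σ(i)}`). If the fixed field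
`K = M^G` is rational over `ℚ`, i.e. `ℚ`-isomorphic to a field of rational functions
`ℚ(w₁, …, w_m)`, then `G` occurs as a Galois group over `ℚ`. -/
theorem noether_problem_implies_occurs_as_galoisGroup (n : ℕ) (hn : 1 ≤ n)
    (G : Subgroup (Equiv.Perm (Fin n)))
    (φ : G →* (FractionRing (MvPolynomial (Fin n) ℚ) ≃ₐ[ℚ]
      FractionRing (MvPolynomial (Fin n) ℚ)))
    (hφ : ∀ (σ : G) (i : Fin n),
      φ σ (algebraMap (MvPolynomial (Fin n) ℚ) (FractionRing (MvPolynomial (Fin n) ℚ))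
          (MvPolynomial.X i)) =
        algebraMap (MvPolynomial (Fin n) ℚ) (FractionRing (MvPolynomial (Fin n) ℚ))
          (MvPolynomial.X ((σ : Equiv.Perm (Fin n)) i)))
    (hrat : ∃ m : ℕ, Nonempty ((IntermediateField.fixedField φ.range) ≃ₐ[ℚ]
      FractionRing (MvPolynomial (Fin m) ℚ))) :
    ∃ (L : Type) (_ : Field L) (_ : Algebra ℚ L),
      FiniteDimensional ℚ L ∧ IsGalois ℚ L ∧
        Nonempty ((L ≃ₐ[ℚ] L) ≃* G) := by
  obtain ⟨m, ⟨e⟩⟩ := hrat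
  let M := FractionRing (MvPolynomial (Fin n) ℚ)
  let K := IntermediateField.fixedField φ.range
  have φ_injective : Function.Injective φ := fun σ τ h ↦ Subtype.ext <| Equiv.ext fun i ↦ by
    refine MvPolynomial.X_injective (R := ℚ) (IsFractionRing.injective _ M ?_)
    rw [← hφ, ← hφ, h]
  have : Finite φ.range := .of_surjective φ.rangeRestrict φ.rangeRestrict_surjective
  have := isGaloisGroup_fixedField φ.range
  let _ : Algebra (MvPolynomial (Fin m) ℚ) K :=
    (e.symm.toRingHom.comp (algebraMap _ (FractionRing (MvPolynomial (Fin m) ℚ)))).toAlgebra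
  have : IsFractionRing (MvPolynomial (Fin m) ℚ) K :=
    IsLocalization.isLocalization_of_algEquiv _
      (AlgEquiv.ofRingEquiv (f := e.symm.toRingEquiv) fun _ ↦ rfl)
  obtain ⟨L, _, _, finite, galois, ⟨f⟩⟩ :=
    exists_isGalois_rat_of_isFractionRing_rat (ι := Fin n) (κ := Fin m) (Γ := φ.range) (M := M) K
      (by rintro ⟨_, σ, rfl⟩; exact ⟨σ, hφ σ⟩)
  exact ⟨L, _, _, finite, galois, ⟨f.trans (MonoidHom.ofInjective φ_injective).symm⟩⟩
end
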